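/- Let n ≥ 1. There exist constants ε₀ > 0 and r > 0, depending only on n, with the following property: if K is a smooth, strictly convex body in ℝ^{n+1} with positive support function h containing the origin in its interior, and 1 − ε ≤ h(x)·det(A(x)+x⊗x) ≤ 1 + ε for all x ∈ S^n for some ε ∈ (0, ε₀), then K contains a closed ball of radius r; more precisely, the translated body K − c(K) contains the closed ball of radius r centered at the origin, i.e. h(x) − ⟨x, c(K)⟩ ≥ r for all x ∈ S^n. -/

import Mathlib

open MeasureTheory Metric Real
open scoped InnerProductSpace ENNReal Topology

noncomputable section

/-- Euclidean space `ℝ^{n+1}`. -/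
abbrev Eu (n : ℕ) : Type := EuclideanSpace ℝ (Fin (n + 1))

/-- The unit sphere `S^n ⊆ ℝ^{n+1}` as a subtype. -/
abbrev Sph (n : ℕ) : Type := Metric.sphere (0 : Eu n) 1

/-- The spherical Lebesgue (surface) measure on `S^n`. -/
def sphMeas (n : ℕ) : Measure (Sph n) := (volume : Measure (Eu n)).toSphere

/-- The support function of a set `K ⊆ ℝ^{n+1}`. -/
def sfn {n : ℕ} (K : Set (Eu n)) (z : Eu n) : ℝ :=
  sSup ((fun y => ⟪z, y⟫_ℝ) '' K)

/-- The Hessian endomorphism `A(x) = D(∇ h_K)(x)`. -/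
def hessA {n : ℕ} (K : Set (Eu n)) (x : Eu n) : Eu n →L[ℝ] Eu n :=
  fderiv ℝ (gradient (sfn K)) x

/-- The rank-one endomorphism `x ⊗ x : v ↦ ⟨v, x⟩ x`. -/
def tens {n : ℕ} (x : Eu n) : Eu n →L[ℝ] Eu n :=
  (innerSL ℝ x).smulRight x

/-- `det (A(x) + x ⊗ x)`, the reciprocal Gauss curvature `1/𝒦` at `x ∈ S^n`. -/
def rK {n : ℕ} (K : Set (Eu n)) (x : Eu n) : ℝ :=
  LinearMap.det ((hessA K x + tens x : Eu n →L[ℝ] Eu n) : Eu n →ₗ[ℝ] Eu n)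

/-- `K` is a smooth, strictly convex body with positive support function. -/
structure IsSmoothConvexBody {n : ℕ} (K : Set (Eu n)) : Prop where
  compact : IsCompact K
  convex : Convex ℝ K
  interior_nonempty : (interior K).Nonempty
  pos : ∀ x : Sph n, 0 < sfn K x
  smooth : ContDiffOn ℝ (⊤ : ℕ∞) (sfn K) {(0 : Eu n)}ᶜ
  posdef : ∀ x : Sph n, ∀ v : Eu n, v ≠ 0 →
    0 < ⟪(hessA K (x : Eu n) + tens (x : Eu n)) v, v⟫_ℝ

/-- The density `h·det(A + x⊗x)` of the measure `dV` with respect to `dθ`. -/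
def dens {n : ℕ} (K : Set (Eu n)) (x : Eu n) : ℝ := sfn K x * rK K x

/-- The centroid-type point `c(K) = (∫ ∇h_K dV)/(∫ dV)`. -/
def cK {n : ℕ} (K : Set (Eu n)) : Eu n :=
  (∫ x : Sph n, dens K x ∂sphMeas n)⁻¹ •
    ∫ x : Sph n, dens K x • gradient (sfn K) x ∂sphMeas n

/-- The support function of the translated body `K - c(K)`. -/
def tsfn {n : ℕ} (K : Set (Eu n)) (x : Eu n) : ℝ := sfn K x - ⟪x, cK K⟫_ℝ


lemma bm_one_compact {A B : Set ℝ} (hA : IsCompact A) (hB : IsCompact B) (hAn : A.Nonempty)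
    (hBn : B.Nonempty) {C : Set ℝ} (h : ∀ a ∈ A, ∀ b ∈ B, (a + b) / 2 ∈ C) :
    volume A + volume B ≤ 2 * volume C := by
  obtain ⟨a, haA, ha⟩ := hA.exists_isGreatest hAn
  obtain ⟨b, hbB, hb⟩ := hB.exists_isLeast hBn
  have h1 : volume ((fun x => x + b) '' A) = volume A := by
    simp
  have h2 : volume ((fun x => x + a) '' B) = volume B := by
    simp
  have hsub : ((fun x => x + b) '' A) ∪ ((fun x => x + a) '' B) ⊆ (fun x => 2 * x) '' C := by
    rintro _ (⟨x, hx, rfl⟩ | ⟨x, hx, rfl⟩)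
    · exact ⟨_, h x hx b hbB, by simp only; ring⟩
    · exact ⟨_, h a haA x hx, by simp only; ring⟩
  have hC : volume ((fun x => 2 * x) '' C) = 2 * volume C := by
    have := Measure.addHaar_smul (volume : Measure ℝ) (2:ℝ) C
    rw [← Set.image_smul] at this
    simpa using this
  rw [← hC, ← h1, ← h2]
  refine le_trans ?_ (measure_mono hsub)
  have hm1 : MeasurableSet ((fun x => x + a) '' B) :=
    (hB.image (by fun_prop)).measurableSet
  have hae : AEDisjoint volume ((fun x => x + b) '' A) ((fun x => x + a) '' B) := by
    refine measure_mono_null (t := {a + b}) ?_ (by simp)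
    rintro y ⟨⟨x, hx, rfl⟩, ⟨z, hz, hzz⟩⟩
    have := ha hx
    have := hb hz
    simp only [Set.mem_singleton_iff] at *
    linarith
  rw [measure_union₀ hm1.nullMeasurableSet hae]

lemma bm_one {A B : Set ℝ} (hA : MeasurableSet A) (hB : MeasurableSet B) (hAn : A.Nonempty)
    (hBn : B.Nonempty) {C : Set ℝ} (h : ∀ a ∈ A, ∀ b ∈ B, (a + b) / 2 ∈ C) :
    volume A + volume B ≤ 2 * volume C := by
  obtain ⟨a, ha⟩ := hAn
  obtain ⟨b, hb⟩ := hBn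
  rw [hA.measure_eq_iSup_isCompact, hB.measure_eq_iSup_isCompact]
  simp only [iSup_and']
  refine ENNReal.biSup_add_biSup_le' (p := fun K => K ⊆ A ∧ IsCompact K)
    (q := fun K => K ⊆ B ∧ IsCompact K) ⟨∅, by simp⟩ ⟨∅, by simp⟩ ?_
  intro K hK L hL
  have := bm_one_compact (C := C) (hK.2.insert a) (hL.2.insert b) ⟨a, by simp⟩ ⟨b, by simp⟩ (by
    rintro x hx y hy
    apply h
    · rcases hx with rfl | hx
      exacts [ha, hK.1 hx]
    · rcases hy with rfl | hy
      exacts [hb, hL.1 hy])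
  exact le_trans (add_le_add (measure_mono (by simp)) (measure_mono (by simp))) this

lemma ennreal_amgm {x y z : ℝ≥0∞} (h : x + y ≤ 2 * z) : x * y ≤ z * z := by
  by_cases hz : z = ∞
  · subst hz; simp
  have hx : x ≠ ∞ := by
    rintro rfl
    simp only [top_add, top_le_iff] at h
    exact ENNReal.mul_ne_top (by simp) hz h
  have hy : y ≠ ∞ := by
    rintro rfl
    simp only [add_top, top_le_iff] at h
    exact ENNReal.mul_ne_top (by simp) hz h
  lift x to NNReal using hx
  lift y to NNReal using hy
  lift z to NNReal using hz
  norm_cast at *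
  have h' : (x:ℝ) + y ≤ 2 * z := by exact_mod_cast h
  have hx := x.coe_nonneg
  have hy := y.coe_nonneg
  have : (x:ℝ) * y ≤ z * z := by nlinarith [sq_nonneg ((x:ℝ) - y)]
  exact_mod_cast this

lemma pl_one_norm {F G H : ℝ → ℝ} (hF : Measurable F) (hG : Measurable G) (hH : Measurable H)
    (hF0 : ∀ x, 0 ≤ F x) (hG0 : ∀ x, 0 ≤ G x) (hH0 : ∀ x, 0 ≤ H x)
    (hF1 : ∀ x, F x ≤ 1) (hG1 : ∀ x, G x ≤ 1)
    (hFs : ∀ t < 1, ∃ x, t < F x) (hGs : ∀ t < 1, ∃ x, t < G x)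
    (h : ∀ x y, F x * G y ≤ H ((x + y) / 2) ^ 2) :
    (∫⁻ x, ENNReal.ofReal (F x)) + (∫⁻ x, ENNReal.ofReal (G x)) ≤
      2 * ∫⁻ x, ENNReal.ofReal (H x) := by
  rw [lintegral_eq_lintegral_meas_lt _ (ae_of_all _ hF0) hF.aemeasurable,
    lintegral_eq_lintegral_meas_lt _ (ae_of_all _ hG0) hG.aemeasurable,
    lintegral_eq_lintegral_meas_lt _ (ae_of_all _ hH0) hH.aemeasurable]
  rw [← lintegral_const_mul' _ _ (by simp), ← lintegral_add_left']
  · refine setLIntegral_mono' measurableSet_Ioi ?_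
    intro t ht
    by_cases ht1 : t < 1
    · refine bm_one (measurableSet_lt measurable_const hF) (measurableSet_lt measurable_const hG)
        (hFs t ht1) (hGs t ht1) ?_
      intro a ha b hb
      simp only [Set.mem_ofPred_eq, Set.mem_Ioi] at *
      have h1 : t * t < F a * G b := by
        apply mul_lt_mul'' ha hb ht.le ht.le
      have h2 := h a b
      by_contra hc
      push Not at hc
      have := hH0 ((a + b) / 2)
      nlinarith
    · have e1 : {a | t < F a} = ∅ := by
        ext a
        simp only [Set.mem_ofPred_eq, Set.mem_empty_iff_false, iff_false]
        linarith [hF1 a]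
      have e2 : {a | t < G a} = ∅ := by
        ext a
        simp only [Set.mem_ofPred_eq, Set.mem_empty_iff_false, iff_false]
        linarith [hG1 a]
      rw [e1, e2]
      simp
  · refine Antitone.measurable (fun s t hst => measure_mono ?_) |>.aemeasurable
    intro x hx
    exact lt_of_le_of_lt hst hx

lemma pl_one_bdd {F G H : ℝ → ℝ≥0∞} (hF : Measurable F) (hG : Measurable G) (hH : Measurable H)
    {N : ℝ≥0∞} (hN : N ≠ ∞) (hFN : ∀ x, F x ≤ N) (hGN : ∀ x, G x ≤ N)
    (h : ∀ x y, F x * G y ≤ H ((x + y) / 2) ^ 2) :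
    (∫⁻ x, F x) * (∫⁻ x, G x) ≤ (∫⁻ x, H x) ^ 2 := by
  set a := ⨆ x, F x with ha
  set b := ⨆ x, G x with hb
  have haF : ∀ x, F x ≤ a := fun x => le_iSup F x
  have hbG : ∀ x, G x ≤ b := fun x => le_iSup G x
  have haN : a ≠ ∞ := ne_top_of_le_ne_top hN (iSup_le hFN)
  have hbN : b ≠ ∞ := ne_top_of_le_ne_top hN (iSup_le hGN)
  by_cases ha0 : a = 0
  · have : ∀ x, F x = 0 := fun x => by simpa [ha0] using haF x
    simp [this]
  by_cases hb0 : b = 0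
  · have : ∀ x, G x = 0 := fun x => by simpa [hb0] using hbG x
    simp [this]
  set r : ℝ≥0∞ := (a * b) ^ (1 / 2 : ℝ) with hr
  have hrr : r ^ 2 = a * b := by
    rw [hr, ← ENNReal.rpow_natCast, ← ENNReal.rpow_mul]
    norm_num
  have hab : a * b ≠ ∞ := ENNReal.mul_ne_top haN hbN
  have hr0 : r ≠ 0 := by
    intro h0
    rw [h0] at hrr
    have : a * b = 0 := by rw [← hrr]; simp
    simp [ha0, hb0] at this
  have hrt : r ≠ ∞ := ENNReal.rpow_ne_top_of_nonneg (by norm_num) hab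
  -- normalised
  have hF1 : ∀ x, F x / a ≤ 1 := fun x => ENNReal.div_le_of_le_mul (by simpa using haF x)
  have hG1 : ∀ x, G x / b ≤ 1 := fun x => ENNReal.div_le_of_le_mul (by simpa using hbG x)
  have hFt : ∀ x, F x / a ≠ ∞ := fun x => ne_top_of_le_ne_top (by simp) (hF1 x)
  have hGt : ∀ x, G x / b ≠ ∞ := fun x => ne_top_of_le_ne_top (by simp) (hG1 x)
  have hHt : ∀ x, min (H x / r) 1 ≠ ∞ := fun x => ne_top_of_le_ne_top (by simp) (min_le_right _ _)
  have key := pl_one_norm (F := fun x => (F x / a).toReal) (G := fun x => (G x / b).toReal)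
    (H := fun x => (min (H x / r) 1).toReal) (by fun_prop) (by fun_prop) (by fun_prop)
    (fun _ => ENNReal.toReal_nonneg) (fun _ => ENNReal.toReal_nonneg)
    (fun _ => ENNReal.toReal_nonneg)
    (fun x => ENNReal.toReal_le_of_le_ofReal (by simp) (by simpa using hF1 x))
    (fun x => ENNReal.toReal_le_of_le_ofReal (by simp) (by simpa using hG1 x))
    (by
      intro t ht
      by_cases ht0 : t < 0
      · exact ⟨0, lt_of_lt_of_le ht0 ENNReal.toReal_nonneg⟩
      push Not at ht0
      have : ENNReal.ofReal t * a < a := by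
        calc _ < 1 * a := ENNReal.mul_lt_mul_left ha0 haN (by simpa using ht)
          _ = a := one_mul a
      obtain ⟨x, hx⟩ := lt_iSup_iff.1 (lt_of_lt_of_eq this ha)
      refine ⟨x, ?_⟩
      rw [← ENNReal.ofReal_lt_iff_lt_toReal ht0 (hFt x)]
      exact (ENNReal.lt_div_iff_mul_lt (Or.inl ha0) (Or.inl haN)).2 hx)
    (by
      intro t ht
      by_cases ht0 : t < 0
      · exact ⟨0, lt_of_lt_of_le ht0 ENNReal.toReal_nonneg⟩
      push Not at ht0
      have : ENNReal.ofReal t * b < b := by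
        calc _ < 1 * b := ENNReal.mul_lt_mul_left hb0 hbN (by simpa using ht)
          _ = b := one_mul b
      obtain ⟨x, hx⟩ := lt_iSup_iff.1 (lt_of_lt_of_eq this hb)
      refine ⟨x, ?_⟩
      rw [← ENNReal.ofReal_lt_iff_lt_toReal ht0 (hGt x)]
      exact (ENNReal.lt_div_iff_mul_lt (Or.inl hb0) (Or.inl hbN)).2 hx)
    (by
      intro x y
      rw [← ENNReal.toReal_mul, ← ENNReal.toReal_pow]
      refine ENNReal.toReal_mono (ENNReal.pow_ne_top (hHt _)) ?_
      have h1 : F x / a * (G y / b) ≤ (H ((x + y) / 2) / r) ^ 2 := by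
        rw [div_eq_mul_inv, div_eq_mul_inv, div_eq_mul_inv, mul_pow, ← ENNReal.inv_pow, hrr,
          ENNReal.mul_inv (Or.inl ha0) (Or.inl haN)]
        calc _ = (F x * G y) * (a⁻¹ * b⁻¹) := by ring
          _ ≤ _ := by gcongr; exact h x y
      rcases le_total (H ((x + y) / 2) / r) 1 with h2 | h2
      · rw [min_eq_left h2]; exact h1
      · rw [min_eq_right h2, one_pow]
        exact mul_le_one' (hF1 x) (hG1 y))
  simp only [ENNReal.ofReal_toReal (hFt _), ENNReal.ofReal_toReal (hGt _),
    ENNReal.ofReal_toReal (hHt _)] at key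
  have key2 : (∫⁻ x, F x / a) + (∫⁻ x, G x / b) ≤ 2 * ∫⁻ x, H x / r :=
    key.trans (mul_le_mul_right (lintegral_mono (fun x => min_le_left _ _)) _)
  have key3 := ennreal_amgm key2
  simp only [div_eq_mul_inv] at key3
  rw [lintegral_mul_const _ hF, lintegral_mul_const _ hG, lintegral_mul_const _ hH] at key3
  have eF : a * (∫⁻ x, F x) * a⁻¹ = ∫⁻ x, F x := by
    rw [mul_right_comm, ENNReal.mul_inv_cancel ha0 haN, one_mul]
  calc (∫⁻ x, F x) * (∫⁻ x, G x)
      = (a * a⁻¹) * (b * b⁻¹) * ((∫⁻ x, F x) * (∫⁻ x, G x)) := by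
        rw [ENNReal.mul_inv_cancel ha0 haN, ENNReal.mul_inv_cancel hb0 hbN]; simp
    _ = (a * b) * ((∫⁻ x, F x) * a⁻¹ * ((∫⁻ x, G x) * b⁻¹)) := by ring
    _ ≤ (a * b) * ((∫⁻ x, H x) * r⁻¹ * ((∫⁻ x, H x) * r⁻¹)) := by gcongr
    _ = (r * r⁻¹) * (r * r⁻¹) * (∫⁻ x, H x) ^ 2 := by rw [← hrr]; ring
    _ = (∫⁻ x, H x) ^ 2 := by rw [ENNReal.mul_inv_cancel hr0 hrt]; simp

lemma lintegral_min_nat {α : Type*} [MeasurableSpace α] {μ : Measure α} {F : α → ℝ≥0∞}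
    (hF : Measurable F) : ∫⁻ x, F x ∂μ = ⨆ N : ℕ, ∫⁻ x, min (F x) N ∂μ := by
  rw [← lintegral_iSup]
  · congr 1
    ext x
    apply le_antisymm
    · by_cases hx : F x = ∞
      · rw [hx]
        simp [ENNReal.iSup_natCast]
      · obtain ⟨N, hN⟩ := ENNReal.exists_nat_gt hx
        exact le_iSup_of_le N (le_min le_rfl hN.le)
    · exact iSup_le fun N => min_le_left _ _
  · intro N; fun_prop
  · intro N M hNM x
    exact min_le_min_left _ (by exact_mod_cast hNM)

lemma pl_one {F G H : ℝ → ℝ≥0∞} (hF : Measurable F) (hG : Measurable G) (hH : Measurable H)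
    (h : ∀ x y, F x * G y ≤ H ((x + y) / 2) ^ 2) :
    (∫⁻ x, F x) * (∫⁻ x, G x) ≤ (∫⁻ x, H x) ^ 2 := by
  rw [lintegral_min_nat hF, lintegral_min_nat hG, ENNReal.iSup_mul]
  refine iSup_le fun N => ?_
  rw [ENNReal.mul_iSup]
  refine iSup_le fun M => ?_
  refine pl_one_bdd (N := ((max N M : ℕ) : ℝ≥0∞)) (by fun_prop) (by fun_prop) hH (by simp)
    (fun x => (min_le_right _ _).trans (by simp))
    (fun x => (min_le_right _ _).trans (by simp)) ?_
  intro x y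
  exact (mul_le_mul' (min_le_left _ _) (min_le_left _ _)).trans (h x y)

lemma pl_pi (n : ℕ) : ∀ {F G H : (Fin n → ℝ) → ℝ≥0∞}, Measurable F → Measurable G →
    Measurable H → (∀ x y, F x * G y ≤ H ((1 / 2 : ℝ) • (x + y)) ^ 2) →
    (∫⁻ x, F x) * (∫⁻ x, G x) ≤ (∫⁻ x, H x) ^ 2 := by
  induction n with
  | zero =>
    intro F G H hF hG hH h
    have e : ∀ F : (Fin 0 → ℝ) → ℝ≥0∞, ∫⁻ x, F x = F default := by
      intro F
      rw [lintegral_unique]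
      simp only [volume_pi, Measure.pi_univ, Finset.univ_eq_empty, Finset.prod_empty, mul_one]
      congr 1; exact Subsingleton.elim _ _
    rw [e, e, e]
    refine (h default default).trans (le_of_eq ?_)
    congr 2
    exact Subsingleton.elim _ _
  | succ n ih =>
    intro F G H hF hG hH h
    have e : ∀ F : (Fin (n + 1) → ℝ) → ℝ≥0∞, Measurable F →
        ∫⁻ x, F x = ∫⁻ s : ℝ, ∫⁻ y : Fin n → ℝ, F (Fin.cons s y) := by
      intro F hF
      have hp := (volume_preserving_piFinSuccAbove (fun _ : Fin (n + 1) => ℝ) 0).symm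
      rw [← hp.lintegral_comp hF, Measure.volume_eq_prod, lintegral_prod]
      · refine lintegral_congr fun s => lintegral_congr fun y => ?_
        simp [MeasurableEquiv.piFinSuccAbove]
        rfl
      · exact (hF.comp (MeasurableEquiv.measurable _)).aemeasurable
    have hm : ∀ F : (Fin (n + 1) → ℝ) → ℝ≥0∞, Measurable F →
        Measurable (fun p : ℝ × (Fin n → ℝ) => F (Fin.cons p.1 p.2)) := by
      intro F hF
      have := hF.comp
        (MeasurableEquiv.piFinSuccAbove (fun _ : Fin (n + 1) => ℝ) 0).symm.measurable
      convert this using 2 with p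
      simp [MeasurableEquiv.piFinSuccAbove]
      rfl
    rw [e F hF, e G hG, e H hH]
    refine pl_one (hm F hF).lintegral_prod_right' (hm G hG).lintegral_prod_right'
      (hm H hH).lintegral_prod_right' ?_
    intro s t
    refine ih ((hm F hF).comp measurable_prodMk_left) ((hm G hG).comp measurable_prodMk_left)
      ((hm H hH).comp measurable_prodMk_left) ?_
    intro x y
    refine (h _ _).trans (le_of_eq ?_)
    congr 2
    ext i
    refine Fin.cases ?_ (fun i => ?_) i
    · simp; ring
    · simp; ring

/-- Brunn-Minkowski in multiplicative midpoint form. -/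
lemma bm_set {n : ℕ} {A B C : Set (Eu n)} (hA : MeasurableSet A) (hB : MeasurableSet B)
    (hC : MeasurableSet C) (h : ∀ a ∈ A, ∀ b ∈ B, (1 / 2 : ℝ) • (a + b) ∈ C) :
    volume A * volume B ≤ volume C ^ 2 := by
  have hp := EuclideanSpace.volume_preserving_symm_measurableEquiv_toLp (Fin (n + 1))
  set T := (MeasurableEquiv.toLp 2 (Fin (n + 1) → ℝ)) with hT
  have hp' : MeasurePreserving T volume volume := PiLp.volume_preserving_toLp (Fin (n+1))
  have e : ∀ A : Set (Eu n), MeasurableSet A →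
      volume A = ∫⁻ x : Fin (n + 1) → ℝ, (T ⁻¹' A).indicator 1 x := by
    intro A hA
    rw [lintegral_indicator_one (T.measurable hA), hp'.measure_preimage hA.nullMeasurableSet]
  rw [e A hA, e B hB, e C hC]
  refine pl_pi _ (measurable_one.indicator (T.measurable hA))
    (measurable_one.indicator (T.measurable hB)) (measurable_one.indicator (T.measurable hC)) ?_
  intro x y
  by_cases hx : T x ∈ A
  · by_cases hy : T y ∈ B
    · have := h _ hx _ hy
      have h2 : (1 / 2 : ℝ) • (x + y) ∈ T ⁻¹' C := this
      rw [Set.indicator_of_mem h2]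
      simp [Set.indicator_of_mem (show x ∈ T ⁻¹' A from hx),
        Set.indicator_of_mem (show y ∈ T ⁻¹' B from hy)]
    · simp [Set.indicator_of_notMem (show y ∉ T ⁻¹' B from hy)]
  · simp [Set.indicator_of_notMem (show x ∉ T ⁻¹' A from hx)]

/-- The inverse Gauss map. -/
def Xg {n : ℕ} (K : Set (Eu n)) (z : Eu n) : Eu n := gradient (sfn K) z

section supp
variable {n : ℕ} {K : Set (Eu n)}

lemma sfn_bdd (hK : IsCompact K) (z : Eu n) : BddAbove ((fun y => ⟪z, y⟫_ℝ) '' K) :=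
  (hK.image (by fun_prop)).bddAbove

lemma sfn_ge (hK : IsCompact K) (z : Eu n) {y : Eu n} (hy : y ∈ K) : ⟪z, y⟫_ℝ ≤ sfn K z :=
  le_csSup (sfn_bdd hK z) ⟨y, hy, rfl⟩

lemma isc_nonempty (hK : IsSmoothConvexBody K) : K.Nonempty :=
  hK.interior_nonempty.mono interior_subset

lemma sfn_exists (hK : IsSmoothConvexBody K) (z : Eu n) : ∃ p ∈ K, ⟪z, p⟫_ℝ = sfn K z := by
  obtain ⟨p, hp, h⟩ := hK.compact.exists_sSup_image_eq (isc_nonempty hK)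
    (f := fun y => ⟪z, y⟫_ℝ) (by fun_prop)
  exact ⟨p, hp, h.symm⟩

lemma sfn_smul (hK : IsSmoothConvexBody K) (z : Eu n) {r : ℝ} (hr : 0 ≤ r) :
    sfn K (r • z) = r * sfn K z := by
  apply le_antisymm
  · obtain ⟨p, hp, h⟩ := sfn_exists hK (r • z)
    rw [← h, real_inner_smul_left]
    exact mul_le_mul_of_nonneg_left (sfn_ge hK.compact z hp) hr
  · obtain ⟨p, hp, h⟩ := sfn_exists hK z
    rw [← h, ← real_inner_smul_left]
    exact sfn_ge hK.compact _ hp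

lemma sfn_add_le (hK : IsSmoothConvexBody K) (z w : Eu n) :
    sfn K (z + w) ≤ sfn K z + sfn K w := by
  obtain ⟨p, hp, h⟩ := sfn_exists hK (z + w)
  rw [← h, inner_add_left]
  exact add_le_add (sfn_ge hK.compact z hp) (sfn_ge hK.compact w hp)

lemma sfn_zero (hK : IsSmoothConvexBody K) : sfn K 0 = 0 := by
  have := sfn_smul hK 0 (le_refl (0:ℝ))
  simpa using this

/-- normalisation -/
def uvec {n : ℕ} (z : Eu n) : Eu n := ‖z‖⁻¹ • z

lemma norm_uvec {z : Eu n} (hz : z ≠ 0) : ‖uvec z‖ = 1 := by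
  have : ‖z‖ ≠ 0 := norm_ne_zero_iff.2 hz
  simp [uvec, norm_smul, this]

lemma norm_smul_uvec {z : Eu n} (hz : z ≠ 0) : ‖z‖ • uvec z = z := by
  have : ‖z‖ ≠ 0 := norm_ne_zero_iff.2 hz
  simp [uvec, smul_smul, this]

lemma ne_zero_of_norm_one {z : Eu n} (hz : ‖z‖ = 1) : z ≠ 0 := by
  rintro rfl; simp at hz

lemma sfn_pos1 (hK : IsSmoothConvexBody K) {z : Eu n} (hz : ‖z‖ = 1) : 0 < sfn K z :=
  hK.pos ⟨z, by simpa using hz⟩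

lemma sfn_pos (hK : IsSmoothConvexBody K) {z : Eu n} (hz : z ≠ 0) : 0 < sfn K z := by
  rw [← norm_smul_uvec hz, sfn_smul hK _ (norm_nonneg _)]
  exact mul_pos (norm_pos_iff.2 hz) (sfn_pos1 hK (norm_uvec hz))

lemma sfn_contDiffAt (hK : IsSmoothConvexBody K) {z : Eu n} (hz : z ≠ 0) :
    ContDiffAt ℝ (⊤ : ℕ∞) (sfn K) z :=
  (hK.smooth z hz).contDiffAt (isOpen_compl_singleton.mem_nhds hz)

lemma sfn_hasGrad (hK : IsSmoothConvexBody K) {z : Eu n} (hz : z ≠ 0) :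
    HasGradientAt (sfn K) (Xg K z) z :=
  ((sfn_contDiffAt hK hz).differentiableAt (by simp)).hasGradientAt

lemma sfn_hasFDeriv (hK : IsSmoothConvexBody K) {z : Eu n} (hz : z ≠ 0) :
    HasFDerivAt (sfn K) (innerSL ℝ (Xg K z)) z :=
  (sfn_hasGrad hK hz).hasFDerivAt

lemma Xg_unique (hK : IsSmoothConvexBody K) {z p : Eu n} (hz : z ≠ 0) (hp : p ∈ K)
    (h : ⟪z, p⟫_ℝ = sfn K z) : Xg K z = p := by
  have h1 : IsLocalMin (fun w => sfn K w - ⟪p, w⟫_ℝ) z := by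
    refine Filter.Eventually.of_forall fun w => ?_
    have := sfn_ge hK.compact w hp
    simp only [real_inner_comm w p, real_inner_comm z p]
    linarith
  have h2 : HasFDerivAt (fun w => sfn K w - ⟪p, w⟫_ℝ) (innerSL ℝ (Xg K z) - innerSL ℝ p) z :=
    (sfn_hasFDeriv hK hz).sub (innerSL ℝ p).hasFDerivAt
  have h3 := h1.hasFDerivAt_eq_zero h2
  rw [sub_eq_zero] at h3
  refine ext_inner_right ℝ fun v => ?_
  exact congrArg (fun L : Eu n →L[ℝ] ℝ => L v) h3

lemma Xg_mem (hK : IsSmoothConvexBody K) {z : Eu n} (hz : z ≠ 0) : Xg K z ∈ K := by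
  obtain ⟨p, hp, h⟩ := sfn_exists hK z
  rwa [Xg_unique hK hz hp h]

lemma inner_Xg (hK : IsSmoothConvexBody K) {z : Eu n} (hz : z ≠ 0) :
    ⟪z, Xg K z⟫_ℝ = sfn K z := by
  obtain ⟨p, hp, h⟩ := sfn_exists hK z
  rwa [Xg_unique hK hz hp h]

lemma Xg_smul (hK : IsSmoothConvexBody K) {z : Eu n} (hz : z ≠ 0) {r : ℝ} (hr : 0 < r) :
    Xg K (r • z) = Xg K z := by
  refine Xg_unique hK (smul_ne_zero hr.ne' hz) (Xg_mem hK hz) ?_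
  rw [real_inner_smul_left, inner_Xg hK hz, sfn_smul hK _ hr.le]

lemma Xg_contDiffAt (hK : IsSmoothConvexBody K) {z : Eu n} (hz : z ≠ 0) :
    ContDiffAt ℝ (⊤ : ℕ∞) (Xg K) z := by
  have h1 : ContDiffAt ℝ (⊤ : ℕ∞) (fderiv ℝ (sfn K)) z :=
    (sfn_contDiffAt hK hz).fderiv_right (by simp)
  exact ((InnerProductSpace.toDual ℝ (Eu n)).symm.contDiff.contDiffAt).comp z h1

lemma Xg_hasFDeriv (hK : IsSmoothConvexBody K) {z : Eu n} (hz : z ≠ 0) :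
    HasFDerivAt (Xg K) (hessA K z) z :=
  ((Xg_contDiffAt hK hz).differentiableAt (by simp)).hasFDerivAt

lemma hessA_contDiffAt (hK : IsSmoothConvexBody K) {z : Eu n} (hz : z ≠ 0) :
    ContDiffAt ℝ (⊤ : ℕ∞) (hessA K) z :=
  (Xg_contDiffAt hK hz).fderiv_right (by simp)

lemma hessA_symm (hK : IsSmoothConvexBody K) {z : Eu n} (hz : z ≠ 0) (v w : Eu n) :
    ⟪hessA K z v, w⟫_ℝ = ⟪v, hessA K z w⟫_ℝ := by
  have h1 : IsSymmSndFDerivAt ℝ (sfn K) z :=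
    (sfn_contDiffAt hK hz).isSymmSndFDerivAt
      (by simp only [minSmoothness_of_isRCLikeNormedField]; exact WithTop.coe_le_coe.2 (le_top : (2:ℕ∞) ≤ ⊤))
  have h2 : ∀ᶠ y in 𝓝 z, fderiv ℝ (sfn K) y = innerSL ℝ (Xg K y) := by
    filter_upwards [isOpen_compl_singleton.mem_nhds hz] with y hy
    exact (sfn_hasFDeriv hK hy).fderiv
  have h3 : HasFDerivAt (fun y => innerSL ℝ (Xg K y)) ((innerSL ℝ).comp (hessA K z)) z :=
    (innerSL ℝ : Eu n →L[ℝ] Eu n →L[ℝ] ℝ).hasFDerivAt.comp z (Xg_hasFDeriv hK hz)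
  have h4 : fderiv ℝ (fderiv ℝ (sfn K)) z = (innerSL ℝ).comp (hessA K z) := by
    rw [Filter.EventuallyEq.fderiv_eq h2]
    exact h3.fderiv
  have h5 := h1 v w
  rw [h4] at h5
  simp only [ContinuousLinearMap.comp_apply, innerSL_apply_apply] at h5
  rw [h5, real_inner_comm]

lemma hessA_self (hK : IsSmoothConvexBody K) {z : Eu n} (hz : z ≠ 0) : hessA K z z = 0 := by
  have h1 : HasDerivAt (fun r : ℝ => Xg K (r • z)) (hessA K z z) 1 := by
    have : HasDerivAt (fun r : ℝ => r • z) z 1 := by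
      simpa using (hasDerivAt_id (1:ℝ)).smul_const z
    have h2 : HasFDerivAt (Xg K) (hessA K z) ((1:ℝ) • z) := by
      simpa using Xg_hasFDeriv hK hz
    exact h2.comp_hasDerivAt (1:ℝ) this
  have h2 : (fun r : ℝ => Xg K (r • z)) =ᶠ[𝓝 1] fun _ => Xg K z := by
    filter_upwards [lt_mem_nhds (zero_lt_one' ℝ)] with r hr
    exact Xg_smul hK hz hr
  exact h1.unique ((hasDerivAt_const (1:ℝ) (Xg K z)).congr_of_eventuallyEq h2)

lemma hessA_smul (hK : IsSmoothConvexBody K) {z : Eu n} (hz : z ≠ 0) {r : ℝ} (hr : 0 < r) :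
    hessA K (r • z) = r⁻¹ • hessA K z := by
  have h1 : HasFDerivAt (fun w => Xg K (r • w)) (r • hessA K (r • z)) z := by
    have h2 : HasFDerivAt (fun w : Eu n => r • w) (r • ContinuousLinearMap.id ℝ (Eu n)) z :=
      (hasFDerivAt_id z).const_smul r
    have h3 := (Xg_hasFDeriv hK (smul_ne_zero hr.ne' hz)).comp z h2
    have e : r • hessA K (r • z) = (hessA K (r • z)).comp (r • ContinuousLinearMap.id ℝ (Eu n)) := by
      ext v; simp
    rw [e]; exact h3
  have h2 : (fun w => Xg K (r • w)) =ᶠ[𝓝 z] Xg K := by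
    filter_upwards [isOpen_compl_singleton.mem_nhds hz] with w hw
    exact Xg_smul hK hw hr
  have h3 := h1.unique ((Xg_hasFDeriv hK hz).congr_of_eventuallyEq h2)
  rw [← h3, smul_smul, inv_mul_cancel₀ hr.ne', one_smul]

lemma hessA_pos (hK : IsSmoothConvexBody K) {x : Eu n} (hx : ‖x‖ = 1) {v : Eu n}
    (hv : ⟪x, v⟫_ℝ = 0) (hv0 : v ≠ 0) : 0 < ⟪hessA K x v, v⟫_ℝ := by
  have := hK.posdef ⟨x, by simpa using hx⟩ v hv0
  simpa [tens, inner_add_left, hv] using this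

lemma hessA_nonneg (hK : IsSmoothConvexBody K) {x : Eu n} (hx : ‖x‖ = 1) (v : Eu n) :
    0 ≤ ⟪hessA K x v, v⟫_ℝ := by
  have hx0 := ne_zero_of_norm_one hx
  set u := v - ⟪x, v⟫_ℝ • x with hu
  have hxu : ⟪x, u⟫_ℝ = 0 := by
    simp [hu, inner_sub_right, real_inner_smul_right, hx]
  have hvu : v = u + ⟪x, v⟫_ℝ • x := by simp [hu]
  have h1 : hessA K x v = hessA K x u := by
    rw [hvu, map_add, map_smul, hessA_self hK hx0]; simp
  have h2 : ⟪hessA K x v, v⟫_ℝ = ⟪hessA K x u, u⟫_ℝ := by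
    rw [h1]
    conv_lhs => rw [hvu]
    rw [inner_add_right, real_inner_smul_right, hessA_symm hK hx0 u x, hessA_self hK hx0]
    simp
  rw [h2]
  by_cases hu0 : u = 0
  · simp [hu0]
  · exact (hessA_pos hK hx hxu hu0).le

lemma Xg_le (hK : IsSmoothConvexBody K) {y : Eu n} (hy : y ≠ 0) (w : Eu n) :
    ⟪w, Xg K y⟫_ℝ ≤ sfn K w := sfn_ge hK.compact w (Xg_mem hK hy)

lemma Xg_inj_sphere (hK : IsSmoothConvexBody K) {x y : Eu n} (hx : ‖x‖ = 1) (hy : ‖y‖ = 1)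
    (h : Xg K x = Xg K y) : x = y := by
  have hx0 := ne_zero_of_norm_one hx
  have hy0 := ne_zero_of_norm_one hy
  have hne : x ≠ -y := by
    rintro hxy
    have h1 := inner_Xg hK hx0
    have h2 := inner_Xg hK hy0
    have h3 := sfn_pos hK hx0
    have h4 := sfn_pos hK hy0
    rw [← h] at h2
    rw [hxy, inner_neg_left, ← hxy, h2] at h1
    linarith
  have hz : ∀ t : ℝ, 0 ≤ t → x + t • y ≠ 0 := by
    intro t ht h0
    apply hne
    have h1 : x = -(t • y) := eq_neg_of_add_eq_zero_left h0
    have h2 : ‖x‖ = t := by rw [h1, norm_neg, norm_smul, hy, norm_of_nonneg ht, mul_one]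
    rw [h1, ← h2, hx, one_smul]
  have hX : ∀ t : ℝ, 0 ≤ t → Xg K (x + t • y) = Xg K x := by
    intro t ht
    refine Xg_unique hK (hz t ht) (Xg_mem hK hx0) ?_
    apply le_antisymm (Xg_le hK hx0 _)
    refine (sfn_add_le hK _ _).trans ?_
    rw [sfn_smul hK _ ht, inner_add_left, real_inner_smul_left, inner_Xg hK hx0, h,
      inner_Xg hK hy0]
  have hd : HasDerivAt (fun t : ℝ => Xg K (x + t • y)) (hessA K x y) 0 := by
    have h1 : HasDerivAt (fun t : ℝ => x + t • y) y 0 := by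
      simpa using ((hasDerivAt_id (0:ℝ)).smul_const y).const_add x
    have h2 : HasFDerivAt (Xg K) (hessA K x) (x + (0:ℝ) • y) := by
      simpa using Xg_hasFDeriv hK hx0
    exact h2.comp_hasDerivAt (0:ℝ) h1
  have hA : hessA K x y = 0 := by
    have h1 := hd.hasDerivWithinAt (s := Set.Ici 0)
    have h2 : HasDerivWithinAt (fun t : ℝ => Xg K (x + t • y)) 0 (Set.Ici 0) 0 :=
      (hasDerivWithinAt_const (0:ℝ) _ (Xg K x)).congr (fun t ht => hX t ht) (hX 0 le_rfl)
    exact (uniqueDiffWithinAt_Ici (0:ℝ)).eq_deriv _ h1 h2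
  set u := y - ⟪x, y⟫_ℝ • x with hu
  have hxu : ⟪x, u⟫_ℝ = 0 := by
    simp [hu, inner_sub_right, real_inner_smul_right, hx]
  have hAu : hessA K x u = 0 := by
    rw [hu, map_sub, map_smul, hA, hessA_self hK hx0]; simp
  have hu0 : u = 0 := by
    by_contra hu0
    have := hessA_pos hK hx hxu hu0
    rw [hAu] at this
    simp at this
  have hyx : y = ⟪x, y⟫_ℝ • x := by rwa [hu, sub_eq_zero] at hu0
  have h1 : |⟪x, y⟫_ℝ| = 1 := by
    have := congrArg norm hyx
    rw [norm_smul, hx, hy, mul_one] at this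
    exact this.symm
  rcases eq_or_eq_neg_of_abs_eq h1 with h2 | h2
  · rw [h2, one_smul] at hyx; exact hyx.symm
  · rw [h2] at hyx
    exfalso; apply hne; rw [hyx]; simp

/-- The polar map `Ψ(z) = |z| X(z)`. -/
def Psi {n : ℕ} (K : Set (Eu n)) (z : Eu n) : Eu n := ‖z‖ • Xg K z

lemma uvec_smul {x : Eu n} (hx : ‖x‖ = 1) {s : ℝ} (hs : 0 < s) : uvec (s • x) = x := by
  simp [uvec, norm_smul, hx, smul_smul, abs_of_pos hs, hs.ne']

lemma Xg_uvec (hK : IsSmoothConvexBody K) {z : Eu n} (hz : z ≠ 0) :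
    Xg K (uvec z) = Xg K z := Xg_smul hK hz (inv_pos.2 (norm_pos_iff.2 hz))

lemma Psi_smul (hK : IsSmoothConvexBody K) {x : Eu n} (hx : ‖x‖ = 1) {s : ℝ} (hs : 0 < s) :
    Psi K (s • x) = s • Xg K x := by
  rw [Psi, Xg_smul hK (ne_zero_of_norm_one hx) hs, norm_smul, hx, mul_one,
    norm_of_nonneg hs.le]

lemma Psi_injOn (hK : IsSmoothConvexBody K) : Set.InjOn (Psi K) {(0 : Eu n)}ᶜ := by
  have aux : ∀ z : Eu n, z ≠ 0 → ∀ w : Eu n, w ≠ 0 → Psi K z = Psi K w → ‖z‖ ≤ ‖w‖ := by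
    intro z hz w hw h
    have h1 : ⟪z, Psi K z⟫_ℝ = ‖z‖ * sfn K z := by
      rw [Psi, real_inner_smul_right, inner_Xg hK hz]
    have h2 : ⟪z, Psi K w⟫_ℝ ≤ ‖w‖ * sfn K z := by
      rw [Psi, real_inner_smul_right]
      exact mul_le_mul_of_nonneg_left (Xg_le hK hw z) (norm_nonneg _)
    rw [← h, h1] at h2
    exact le_of_mul_le_mul_right h2 (sfn_pos hK hz)
  intro z hz w hw h
  have hn : ‖z‖ = ‖w‖ := le_antisymm (aux z hz w hw h) (aux w hw z hz h.symm)
  have hX : Xg K z = Xg K w := by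
    rw [Psi, Psi, hn] at h
    exact smul_right_injective _ (norm_ne_zero_iff.2 hw) h
  rw [← Xg_uvec hK hz, ← Xg_uvec hK hw] at hX
  have := Xg_inj_sphere hK (norm_uvec hz) (norm_uvec hw) hX
  rw [← norm_smul_uvec hz, ← norm_smul_uvec hw, hn, this]

lemma sphere_nonempty' : (sphere (0 : Eu n) 1).Nonempty :=
  ⟨EuclideanSpace.single 0 1, by simp⟩

lemma sfn_continuousOn (hK : IsSmoothConvexBody K) : ContinuousOn (sfn K) {(0 : Eu n)}ᶜ :=
  hK.smooth.continuousOn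

lemma Psi_surj (hK : IsSmoothConvexBody K) {w : Eu n} (hw : w ≠ 0) :
    ∃ s : ℝ, 0 < s ∧ ∃ y : Eu n, ‖y‖ = 1 ∧ w = s • Xg K y := by
  have hsub : sphere (0 : Eu n) 1 ⊆ {(0 : Eu n)}ᶜ := by
    intro z hz
    exact ne_zero_of_norm_one (by simpa using hz)
  have hc : ContinuousOn (fun y => ⟪w, y⟫_ℝ / sfn K y) (sphere (0 : Eu n) 1) := by
    refine ContinuousOn.div (by fun_prop) ((sfn_continuousOn hK).mono hsub) ?_
    intro z hz
    exact (sfn_pos hK (hsub hz)).ne'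
  obtain ⟨y, hy, hmax⟩ := (isCompact_sphere (0 : Eu n) 1).exists_isMaxOn sphere_nonempty' hc
  have hy1 : ‖y‖ = 1 := by simpa using hy
  have hy0 := ne_zero_of_norm_one hy1
  set s := ⟪w, y⟫_ℝ / sfn K y with hs
  have h1 : ∀ z : Eu n, ‖z‖ = 1 → ⟪w, z⟫_ℝ ≤ s * sfn K z := by
    intro z hz
    have := hmax (show z ∈ sphere (0 : Eu n) 1 by simpa using hz)
    simp only [Set.mem_ofPred_eq] at this
    rwa [div_le_iff₀ (sfn_pos1 hK hz)] at this
  have h2 : ∀ z : Eu n, ⟪w, z⟫_ℝ ≤ s * sfn K z := by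
    intro z
    by_cases hz : z = 0
    · simp [hz, sfn_zero hK]
    · have := h1 _ (norm_uvec hz)
      rw [← norm_smul_uvec hz, real_inner_smul_right, sfn_smul hK _ (norm_nonneg _)]
      nlinarith [norm_nonneg z]
  have hs0 : 0 < s := by
    have h3 := h2 w
    have h4 := sfn_pos hK hw
    have h5 : 0 < ⟪w, w⟫_ℝ := real_inner_self_pos.2 hw
    by_contra h6
    push Not at h6
    nlinarith
  refine ⟨s, hs0, y, hy1, ?_⟩
  have h3 : IsLocalMin (fun z => s * sfn K z - ⟪w, z⟫_ℝ) y := by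
    refine Filter.Eventually.of_forall fun z => ?_
    have := h2 z
    have h4 : s * sfn K y = ⟪w, y⟫_ℝ := by
      rw [hs, div_mul_cancel₀ _ (sfn_pos1 hK hy1).ne']
    simp only
    linarith
  have h4 : HasFDerivAt (fun z => s * sfn K z - ⟪w, z⟫_ℝ) (s • innerSL ℝ (Xg K y) - innerSL ℝ w) y :=
    ((sfn_hasFDeriv hK hy0).const_mul s).sub (innerSL ℝ w).hasFDerivAt
  have h5 := h3.hasFDerivAt_eq_zero h4
  rw [sub_eq_zero] at h5
  refine ext_inner_right ℝ fun v => ?_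
  have := congrArg (fun L : Eu n →L[ℝ] ℝ => L v) h5
  simp only [innerSL_apply_apply, smul_apply, smul_eq_mul] at this
  rw [real_inner_smul_left, this]

end supp

section cov
variable {n : ℕ} {K : Set (Eu n)}

lemma hasFDerivAt_norm' {z : Eu n} (hz : z ≠ 0) :
    HasFDerivAt (fun z : Eu n => ‖z‖) (innerSL ℝ (uvec z)) z := by
  have h1 := (hasStrictFDerivAt_norm_sq z).hasFDerivAt.sqrt (by simpa using hz)
  have h2 : (fun y : Eu n => √(‖y‖ ^ 2)) = fun y => ‖y‖ := by
    ext y; exact Real.sqrt_sq (norm_nonneg y)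
  rw [h2] at h1
  have hz' : ‖z‖ ≠ 0 := norm_ne_zero_iff.2 hz
  have e : innerSL ℝ (uvec z) = (1 / (2 * √(‖z‖ ^ 2))) • (2 • innerSL ℝ z) := by
    ext v
    simp [uvec, real_inner_smul_left, Real.sqrt_sq (norm_nonneg z)]
    ring
  rw [e]; exact h1

lemma Psi_hasFDeriv (hK : IsSmoothConvexBody K) {z : Eu n} (hz : z ≠ 0) :
    HasFDerivAt (Psi K) (hessA K (uvec z) + (innerSL ℝ (uvec z)).smulRight (Xg K (uvec z))) z := by
  have h1 := (hasFDerivAt_norm' hz).smul (Xg_hasFDeriv hK hz)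
  have e : hessA K (uvec z) = ‖z‖ • hessA K z := by
    rw [uvec, hessA_smul hK hz (inv_pos.2 (norm_pos_iff.2 hz)), inv_inv]
  rw [e, Xg_uvec hK hz]
  exact h1

lemma det_id_add_rank_one (x a : Eu n) :
    LinearMap.det ((ContinuousLinearMap.id ℝ (Eu n) + (innerSL ℝ x).smulRight a :
      Eu n →L[ℝ] Eu n) : Eu n →ₗ[ℝ] Eu n) = 1 + ⟪x, a⟫_ℝ := by
  rw [← LinearMap.det_toMatrix (EuclideanSpace.basisFun (Fin (n+1)) ℝ).toBasis]
  have : LinearMap.toMatrix (EuclideanSpace.basisFun (Fin (n+1)) ℝ).toBasis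
      (EuclideanSpace.basisFun (Fin (n+1)) ℝ).toBasis
      ((ContinuousLinearMap.id ℝ (Eu n) + (innerSL ℝ x).smulRight a :
      Eu n →L[ℝ] Eu n) : Eu n →ₗ[ℝ] Eu n) =
      1 + Matrix.replicateCol Unit (fun i => a i) * Matrix.replicateRow Unit (fun i => x i) := by
    ext i j
    rw [LinearMap.toMatrix_apply]
    simp [Matrix.mul_apply, Matrix.one_apply, EuclideanSpace.inner_single_right, mul_comm,
      Pi.single_apply]
  rw [this, Matrix.det_one_add_replicateCol_mul_replicateRow]
  simp [dotProduct, PiLp.inner_apply, mul_comm]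

lemma det_Psi (hK : IsSmoothConvexBody K) {x : Eu n} (hx : ‖x‖ = 1) :
    (hessA K x + (innerSL ℝ x).smulRight (Xg K x)).det = dens K x := by
  have hx0 := ne_zero_of_norm_one hx
  have h : hessA K x + (innerSL ℝ x).smulRight (Xg K x) =
      (ContinuousLinearMap.id ℝ (Eu n) + (innerSL ℝ x).smulRight (Xg K x - x)).comp
        (hessA K x + tens x) := by
    ext1 v
    have h1 : ⟪x, hessA K x v⟫_ℝ = 0 := by
      rw [← hessA_symm hK hx0, hessA_self hK hx0]; simp
    have h2 : ⟪x, x⟫_ℝ = 1 := by rw [real_inner_self_eq_norm_sq, hx]; norm_num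
    simp [tens, inner_add_right, real_inner_smul_right, h1, hx, smul_sub]
  rw [h, ContinuousLinearMap.det, ContinuousLinearMap.toLinearMap_comp, LinearMap.det_comp,
    det_id_add_rank_one]
  have h2 : ⟪x, x⟫_ℝ = 1 := by rw [real_inner_self_eq_norm_sq, hx]; norm_num
  rw [inner_sub_right, inner_Xg hK hx0, h2, dens, rK]
  ring

lemma rK_pos (hK : IsSmoothConvexBody K) {x : Eu n} (hx : ‖x‖ = 1) : 0 < rK K x := by
  have hx0 := ne_zero_of_norm_one hx
  set L : Eu n →ₗ[ℝ] Eu n := ((hessA K x + tens x : Eu n →L[ℝ] Eu n) : Eu n →ₗ[ℝ] Eu n) with hL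
  have hpd := hK.posdef ⟨x, by simpa using hx⟩
  have hsymm : L.IsSymmetric := by
    intro v w
    simp [hL, tens, inner_add_left, inner_add_right, hessA_symm hK hx0 v w,
      real_inner_smul_left, real_inner_smul_right, real_inner_comm, mul_comm]
  have hfr : Module.finrank ℝ (Eu n) = n + 1 := by simp
  rw [rK, ← hL, hsymm.det_eq_prod_eigenvalues hfr]
  simp only [RCLike.ofReal_real_eq_id, id]
  refine Finset.prod_pos fun i _ => ?_
  have h1 := hsymm.apply_eigenvectorBasis hfr i
  have h2 := hpd (hsymm.eigenvectorBasis hfr i)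
    (ne_zero_of_norm_one ((hsymm.eigenvectorBasis hfr).orthonormal.1 i))
  have h3 : (hessA K x + tens x) (hsymm.eigenvectorBasis hfr i) =
      (hsymm.eigenvalues hfr i) • (hsymm.eigenvectorBasis hfr i) := h1
  simp only [h3] at h2
  rw [real_inner_smul_left, real_inner_self_eq_norm_sq,
    (hsymm.eigenvectorBasis hfr).orthonormal.1 i] at h2
  simpa using h2

lemma dens_pos (hK : IsSmoothConvexBody K) {x : Eu n} (hx : ‖x‖ = 1) : 0 < dens K x :=
  mul_pos (sfn_pos1 hK hx) (rK_pos hK hx)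

/-- Polar coordinates. -/
lemma polar_mp : MeasurePreserving (homeomorphUnitSphereProd (Eu n))
    ((volume : Measure (Eu n)).comap (↑))
      ((sphMeas n).prod (Measure.volumeIoiPow n)) := by
  have := Measure.measurePreserving_homeomorphUnitSphereProd (volume : Measure (Eu n))
  simpa [sphMeas] using this

lemma polar_lintegral (F : Eu n → ℝ≥0∞) :
    ∫⁻ z, F z = ∫⁻ p : Sph n × Set.Ioi (0:ℝ), F ((p.2 : ℝ) • (p.1 : Eu n))
      ∂((sphMeas n).prod (Measure.volumeIoiPow n)) := by
  have hmp := polar_mp (n := n)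
  have e1 : ∫⁻ z, F z = ∫⁻ z in {(0 : Eu n)}ᶜ, F z := by
    rw [restrict_compl_singleton]
  rw [e1, ← lintegral_subtype_comap (measurableSet_singleton _).compl]
  rw [← hmp.lintegral_comp_emb (Homeomorph.measurableEmbedding _)]
  refine lintegral_congr fun z => ?_
  have := (homeomorphUnitSphereProd (Eu n)).symm_apply_apply z
  conv_lhs => rw [← this]
  rw [homeomorphUnitSphereProd_symm_apply_coe]

lemma polar_integral (F : Eu n → ℝ) :
    ∫ z, F z = ∫ p : Sph n × Set.Ioi (0:ℝ), F ((p.2 : ℝ) • (p.1 : Eu n))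
      ∂((sphMeas n).prod (Measure.volumeIoiPow n)) := by
  have hmp := polar_mp (n := n)
  have e1 : ∫ z, F z = ∫ z in {(0 : Eu n)}ᶜ, F z := by
    rw [restrict_compl_singleton]
  rw [e1, ← integral_subtype_comap (measurableSet_singleton _).compl]
  rw [← hmp.integral_comp (Homeomorph.measurableEmbedding _)]
  refine integral_congr_ae (ae_of_all _ fun z => ?_)
  have := (homeomorphUnitSphereProd (Eu n)).symm_apply_apply z
  simp only
  conv_lhs => rw [← this]
  rw [homeomorphUnitSphereProd_symm_apply_coe]

lemma norm_sph (y : Sph n) : ‖(y : Eu n)‖ = 1 := by simpa using y.2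

/-- The star body with radial data `ρ`. -/
def Dset (K : Set (Eu n)) (ρ : Sph n → ℝ) : Set (Eu n) :=
  {w | ∃ y : Sph n, ∃ s : ℝ, 0 < s ∧ s < ρ y ∧ w = s • Xg K y}

def Rset (ρ : Sph n → ℝ) : Set (Eu n) :=
  {z | ∃ y : Sph n, ∃ s : ℝ, 0 < s ∧ s < ρ y ∧ z = s • (y : Eu n)}

lemma Dset_eq (hK : IsSmoothConvexBody K) (ρ : Sph n → ℝ) : Dset K ρ = Psi K '' Rset ρ := by
  ext w
  constructor
  · rintro ⟨y, s, h0, h1, rfl⟩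
    exact ⟨s • (y : Eu n), ⟨y, s, h0, h1, rfl⟩, Psi_smul hK (norm_sph y) h0⟩
  · rintro ⟨_, ⟨y, s, h0, h1, rfl⟩, rfl⟩
    exact ⟨y, s, h0, h1, Psi_smul hK (norm_sph y) h0⟩

lemma Rset_smul_mem (ρ : Sph n → ℝ) (y : Sph n) {s : ℝ} (hs : 0 < s) :
    s • (y : Eu n) ∈ Rset ρ ↔ s < ρ y := by
  constructor
  · rintro ⟨y', s', h0, h1, h⟩
    have h2 : s = s' := by
      have := congrArg norm h
      simpa [norm_smul, abs_of_pos hs, abs_of_pos h0] using this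
    subst h2
    have : y = y' := Subtype.ext (smul_right_injective _ hs.ne' h)
    rwa [this]
  · intro h; exact ⟨y, s, hs, h, rfl⟩

lemma Rset_ne {ρ : Sph n → ℝ} {z : Eu n} (hz : z ∈ Rset ρ) : z ≠ 0 := by
  obtain ⟨y, s, h0, -, rfl⟩ := hz
  exact smul_ne_zero h0.ne' (ne_zero_of_norm_one (norm_sph y))

lemma Rset_meas {ρ : Sph n → ℝ} (hρ : Measurable ρ) : MeasurableSet (Rset ρ) := by
  have : Rset ρ = Subtype.val '' ((homeomorphUnitSphereProd (Eu n)) ⁻¹'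
      {p : Sph n × Set.Ioi (0:ℝ) | (p.2 : ℝ) < ρ p.1}) := by
    rw [← Homeomorph.image_symm]
    ext z
    constructor
    · rintro ⟨y, s, h0, h1, rfl⟩
      refine ⟨_, ⟨(y, ⟨s, h0⟩), h1, rfl⟩, ?_⟩
      simp
    · rintro ⟨_, ⟨⟨y, ⟨s, h0⟩⟩, h1, rfl⟩, rfl⟩
      exact ⟨y, s, h0, h1, by simp⟩
  rw [this]
  refine (MeasurableEmbedding.subtype_coe (measurableSet_singleton _).compl).measurableSet_image.2 ?_
  refine (homeomorphUnitSphereProd (Eu n)).measurable ?_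
  exact measurableSet_lt (by fun_prop) (by fun_prop)

lemma Dset_meas (hK : IsSmoothConvexBody K) {ρ : Sph n → ℝ} (hρ : Measurable ρ) :
    MeasurableSet (Dset K ρ) := by
  rw [Dset_eq hK]
  exact measurable_image_of_fderivWithin (Rset_meas hρ)
    (fun z hz => (Psi_hasFDeriv hK (Rset_ne hz)).hasFDerivWithinAt)
    ((Psi_injOn hK).mono fun z hz => Rset_ne hz)

lemma Dset_vol (hK : IsSmoothConvexBody K) {ρ : Sph n → ℝ} (hρ : Measurable ρ)
    (hρ0 : ∀ y, 0 < ρ y) (hd : Measurable fun y : Sph n => dens K (y : Eu n)) :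
    volume (Dset K ρ) =
      ∫⁻ y : Sph n, ENNReal.ofReal (ρ y ^ (n + 1) / (n + 1) * dens K y) ∂sphMeas n := by
  rw [Dset_eq hK, ← lintegral_abs_det_fderiv_eq_addHaar_image volume (Rset_meas hρ)
    (fun z hz => (Psi_hasFDeriv hK (Rset_ne hz)).hasFDerivWithinAt)
    ((Psi_injOn hK).mono fun z hz => Rset_ne hz), ← lintegral_indicator (Rset_meas hρ),
    polar_lintegral]
  have e : ∀ p : Sph n × Set.Ioi (0:ℝ), (Rset ρ).indicator (fun z => ENNReal.ofReal
      |(hessA K (uvec z) + (innerSL ℝ (uvec z)).smulRight (Xg K (uvec z))).det|)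
        ((p.2 : ℝ) • (p.1 : Eu n)) =
      {p : Sph n × Set.Ioi (0:ℝ) | (p.2 : ℝ) < ρ p.1}.indicator
        (fun p => ENNReal.ofReal (dens K p.1)) p := by
    rintro ⟨y, ⟨s, hs⟩⟩
    have hs' : 0 < s := hs
    by_cases h : s < ρ y
    · rw [Set.indicator_of_mem ((Rset_smul_mem ρ y hs').2 h), Set.indicator_of_mem (by exact h),
        uvec_smul (norm_sph y) hs', det_Psi hK (norm_sph y),
        abs_of_pos (dens_pos hK (norm_sph y))]
    · rw [Set.indicator_of_notMem (fun h' => h ((Rset_smul_mem ρ y hs').1 h')),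
        Set.indicator_of_notMem (by exact h)]
  simp only [e]
  have hms : MeasurableSet {p : Sph n × Set.Ioi (0:ℝ) | (p.2 : ℝ) < ρ p.1} :=
    measurableSet_lt (by fun_prop) (by fun_prop)
  rw [lintegral_prod]
  · refine lintegral_congr fun y => ?_
    have e2 : ∀ r : Set.Ioi (0:ℝ), {p : Sph n × Set.Ioi (0:ℝ) | (p.2 : ℝ) < ρ p.1}.indicator
        (fun p => ENNReal.ofReal (dens K p.1)) (y, r) =
        (Set.Iio (⟨ρ y, hρ0 y⟩ : Set.Ioi (0:ℝ))).indicator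
          (fun _ => ENNReal.ofReal (dens K y)) r := by
      intro r
      by_cases h : (r : ℝ) < ρ y
      · rw [Set.indicator_of_mem (by exact h), Set.indicator_of_mem (by exact h)]
      · rw [Set.indicator_of_notMem (by exact h), Set.indicator_of_notMem (by exact h)]
    simp only [e2]
    rw [lintegral_indicator_const measurableSet_Iio, Measure.volumeIoiPow_apply_Iio,
      ← ENNReal.ofReal_mul (dens_pos hK (norm_sph y)).le, mul_comm]
  · refine Measurable.aemeasurable ?_
    exact Measurable.indicator ((hd.comp measurable_fst).ennreal_ofReal) hms

end cov

section loc
variable {n : ℕ} {K : Set (Eu n)}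

instance : IsFiniteMeasure (sphMeas n) := by unfold sphMeas; infer_instance

lemma sph_int {E : Type*} [NormedAddCommGroup E] [NormedSpace ℝ E] {g : Sph n → E}
    (hg : Continuous g) : Integrable g (sphMeas n) :=
  hg.integrable_of_hasCompactSupport (HasCompactSupport.of_compactSpace g)

lemma sph_bdd {g : Sph n → ℝ} (hg : Continuous g) : ∃ M, 0 < M ∧ ∀ y, |g y| ≤ M := by
  obtain ⟨M, hM⟩ := (isCompact_range hg.abs).bddAbove
  refine ⟨max M 1, by positivity, fun y => (hM ⟨y, rfl⟩).trans (le_max_left _ _)⟩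

lemma sph_ne (y : Sph n) : (y : Eu n) ≠ 0 := ne_zero_of_norm_one (norm_sph y)

lemma sph_cont_of {E : Type*} [TopologicalSpace E] {g : Eu n → E}
    (hg : ∀ z : Eu n, z ≠ 0 → ContinuousAt g z) : Continuous fun y : Sph n => g y :=
  continuous_iff_continuousAt.2 fun y =>
    (hg y (sph_ne y)).comp continuous_subtype_val.continuousAt

lemma cont_sfn (hK : IsSmoothConvexBody K) : Continuous fun y : Sph n => sfn K y :=
  sph_cont_of fun _ hz => (sfn_contDiffAt hK hz).continuousAt

lemma cont_Xg (hK : IsSmoothConvexBody K) : Continuous fun y : Sph n => Xg K y :=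
  sph_cont_of fun _ hz => (Xg_contDiffAt hK hz).continuousAt

lemma cont_hessA (hK : IsSmoothConvexBody K) : Continuous fun y : Sph n => hessA K y :=
  sph_cont_of fun _ hz => (hessA_contDiffAt hK hz).continuousAt

lemma cont_dens (hK : IsSmoothConvexBody K) : Continuous fun y : Sph n => dens K y := by
  have h1 : Continuous fun y : Sph n =>
      (hessA K (y : Eu n) + (innerSL ℝ (y : Eu n)).smulRight (Xg K (y : Eu n))).det := by
    refine ContinuousLinearMap.continuous_det.comp ?_
    refine (cont_hessA hK).add ?_
    have h2 : Continuous fun y : Sph n => innerSL ℝ (y : Eu n) :=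
      (innerSL ℝ : Eu n →L[ℝ] Eu n →L[ℝ] ℝ).continuous.comp continuous_subtype_val
    have h3 := cont_Xg hK
    exact (ContinuousLinearMap.smulRightL ℝ (Eu n) (Eu n)).continuous₂.comp (h2.prodMk h3)
  refine h1.congr fun y => det_Psi hK (norm_sph y)

lemma hess_unif (hK : IsSmoothConvexBody K) {δ : ℝ} (hδ : 0 < δ) : ∃ ρ, 0 < ρ ∧ ρ ≤ 1 ∧
    ∀ z : Eu n, ‖z‖ = 1 → ∀ v : Eu n, ‖v‖ < ρ → ‖hessA K (z + v) - hessA K z‖ ≤ δ := by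
  have h := (isCompact_sphere (0 : Eu n) 1).uniformContinuousAt_of_continuousAt (hessA K)
    (fun a ha => (hessA_contDiffAt hK (ne_zero_of_norm_one (by simpa using ha))).continuousAt)
    (Metric.dist_mem_uniformity hδ)
  rw [Metric.mem_uniformity_dist] at h
  obtain ⟨ρ, hρ, h⟩ := h
  refine ⟨min ρ 1, by positivity, min_le_right _ _, fun z hz v hv => ?_⟩
  have h1 := @h z (z + v) (by
    simp only [dist_self_add_right]
    exact hv.trans_le (min_le_left _ _)) (by simpa using hz)
  rw [← dist_eq_norm, dist_comm]
  exact le_of_lt h1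

lemma taylor_unif (hK : IsSmoothConvexBody K) {δ : ℝ} (hδ : 0 < δ) : ∃ ρ, 0 < ρ ∧
    ∀ z : Eu n, ‖z‖ = 1 → ∀ v : Eu n, ‖v‖ < ρ →
      sfn K (z + v) ≤ sfn K z + ⟪Xg K z, v⟫_ℝ + ⟪hessA K z v, v⟫_ℝ / 2 + δ * ‖v‖ ^ 2 := by
  obtain ⟨ρ, hρ, hρ1, h⟩ := hess_unif hK hδ
  refine ⟨ρ, hρ, fun z hz v hv => ?_⟩
  have hz0 := ne_zero_of_norm_one hz
  have hne : ∀ w : Eu n, ‖w‖ < ρ → z + w ≠ 0 := by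
    intro w hw h0
    have : z = -w := eq_neg_of_add_eq_zero_left h0
    rw [this, norm_neg] at hz
    linarith
  have hadd : ∀ w : Eu n, HasFDerivAt (fun w : Eu n => z + w) (ContinuousLinearMap.id ℝ (Eu n)) w :=
    fun w => (hasFDerivAt_id w).const_add z
  -- first step
  have hX : ∀ w : Eu n, ‖w‖ < ρ → ‖Xg K (z + w) - Xg K z - hessA K z w‖ ≤ δ * ‖w‖ := by
    intro w hw
    have := (convex_ball (0 : Eu n) ρ).norm_image_sub_le_of_norm_hasFDerivWithin_le
      (f := fun w => Xg K (z + w) - hessA K z w) (f' := fun w => hessA K (z + w) - hessA K z)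
      (C := δ) (x := 0) (y := w) (fun u hu => by
        have hu' : ‖u‖ < ρ := by simpa using hu
        have h1 := (Xg_hasFDeriv hK (hne u hu')).comp u (hadd u)
        have h2 := h1.sub (hessA K z).hasFDerivAt
        exact h2.hasFDerivWithinAt)
      (fun u hu => h z hz u (by simpa using hu)) (by simpa using hρ) (by simpa using hw)
    simp only [add_zero, map_zero, sub_zero] at this
    rwa [sub_right_comm]
  have hq : ∀ w : Eu n, HasFDerivAt (fun w : Eu n => ⟪hessA K z w, w⟫_ℝ / 2)
      (innerSL ℝ (hessA K z w)) w := by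
    intro w
    have h1 := ((hessA K z).hasFDerivAt (x := w)).inner ℝ (hasFDerivAt_id w)
    have h2 := h1.mul_const (2⁻¹ : ℝ)
    have e : (innerSL ℝ (hessA K z w)) = (2⁻¹ : ℝ) • ((fderivInnerCLM ℝ (hessA K z w, id w)).comp
        ((hessA K z).prod (ContinuousLinearMap.id ℝ (Eu n)))) := by
      ext u
      simp only [innerSL_apply_apply, smul_apply, ContinuousLinearMap.comp_apply,
        ContinuousLinearMap.prod_apply, fderivInnerCLM_apply, smul_eq_mul, id,
        ContinuousLinearMap.id_apply]
      rw [hessA_symm hK hz0 u w, real_inner_comm u]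
      ring
    rw [e]; exact h2
  have := (convex_closedBall (0 : Eu n) ‖v‖).norm_image_sub_le_of_norm_hasFDerivWithin_le
      (f := fun w => sfn K (z + w) - ⟪Xg K z, w⟫_ℝ - ⟪hessA K z w, w⟫_ℝ / 2)
      (f' := fun w => innerSL ℝ (Xg K (z + w)) - innerSL ℝ (Xg K z) - innerSL ℝ (hessA K z w))
      (C := δ * ‖v‖) (x := 0) (y := v) (fun u hu => by
        have hu' : ‖u‖ < ρ := lt_of_le_of_lt (by simpa using hu) hv
        have h1 := (sfn_hasFDeriv hK (hne u hu')).comp u (hadd u)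
        have h2 := (h1.sub (innerSL ℝ (Xg K z)).hasFDerivAt).sub (hq u)
        exact h2.hasFDerivWithinAt)
      (fun u hu => by
        have hu' : ‖u‖ ≤ ‖v‖ := by simpa using hu
        rw [← map_sub, ← map_sub, innerSL_apply_norm]
        exact (hX u (hu'.trans_lt hv)).trans (mul_le_mul_of_nonneg_left hu' hδ.le))
      (by simp) (by simp)
  simp only [add_zero, map_zero, sub_zero, inner_zero_right, zero_div] at this
  have h3 := (abs_le.1 this).2
  rw [pow_two, ← mul_assoc]
  linarith

end loc

section loc
variable {n : ℕ} {K : Set (Eu n)}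

lemma rk1 {h u m q σ x : ℝ} (hh : 0 < h) (hu : 0 < 1 + u) (hm : m = h / (1 + u)) (hσ : 0 < σ)
    (hx : 0 < x) (hs : m * σ + x ≤ 2 * h + q) : σ * x ≤ (1 + u) * (h + q / 2) ^ 2 / h := by
  have hm0 : 0 < m := by rw [hm]; positivity
  have h1 : m * σ * x ≤ (h + q / 2) ^ 2 := by
    have h2 : 0 < m * σ := by positivity
    nlinarith [sq_nonneg (m * σ - x)]
  have h3 : σ * x = (1 + u) * (m * σ * x) / h := by
    rw [hm]; field_simp
  rw [h3]
  gcongr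

lemma rk3 {u t B M η g : ℝ} (hM : |u| ≤ |t| * M) (hM2 : |t| * M ≤ 1 / 2) (hB0 : 0 ≤ B)
    (hB : B ≤ M) (hM1 : 1 ≤ M) (hg : g * (1 + u) = 1) (hη : 4 * |t| * M ^ 2 ≤ η) :
    t ^ 2 * g * B + t ^ 4 * g ^ 3 * B ^ 2 / 4 ≤ t ^ 2 * (B + η) := by
  have hu := abs_le.1 hM
  set a := |t| with ha
  have ha0 : 0 ≤ a := abs_nonneg t
  have hta : t ^ 2 = a ^ 2 := (sq_abs t).symm
  have hu0 : 0 < 1 + u := by linarith [hu.1]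
  have hg0 : 0 < g := by
    by_contra hc
    push Not at hc
    nlinarith
  have hg1 : g ≤ 1 + 2 * a * M := by
    have : 1 ≤ (1 + 2 * a * M) * (1 + u) := by nlinarith
    exact le_of_mul_le_mul_right (hg.le.trans this) hu0
  have hg2 : g ≤ 2 := by linarith
  have h1 : g * B ≤ B + 2 * a * M ^ 2 := by
    calc g * B ≤ (1 + 2 * a * M) * B := by gcongr
      _ = B + 2 * a * M * B := by ring
      _ ≤ B + 2 * a * M * M := by gcongr
      _ = _ := by ring
  have ha1 : a ≤ 1 := by nlinarith
  have h2 : t ^ 2 * g ^ 3 * B ^ 2 / 4 ≤ 2 * a * M ^ 2 := by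
    rw [hta]
    calc a ^ 2 * g ^ 3 * B ^ 2 / 4 ≤ a ^ 2 * 2 ^ 3 * M ^ 2 / 4 := by gcongr
      _ = 2 * a * M ^ 2 * a := by ring
      _ ≤ 2 * a * M ^ 2 * 1 := by gcongr
      _ = _ := by ring
  calc _ = t ^ 2 * (g * B + t ^ 2 * g ^ 3 * B ^ 2 / 4) := by ring
    _ ≤ _ := mul_le_mul_of_nonneg_left (by linarith) (sq_nonneg t)

/-- the linear functional deviation -/
def fdev (K : Set (Eu n)) (e : Eu n) (γ : ℝ) (y : Sph n) : ℝ := ⟪Xg K y, e⟫_ℝ - γ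

/-- quadratic form -/
def qA (K : Set (Eu n)) (e : Eu n) (y : Sph n) : ℝ := ⟪hessA K y e, e⟫_ℝ

lemma cont_fdev (hK : IsSmoothConvexBody K) (e : Eu n) (γ : ℝ) : Continuous (fdev K e γ) := by
  have := cont_Xg hK
  unfold fdev
  fun_prop

lemma cont_qA (hK : IsSmoothConvexBody K) (e : Eu n) : Continuous (qA K e) := by
  have := cont_hessA hK
  unfold qA
  fun_prop

lemma qA_nonneg (hK : IsSmoothConvexBody K) (e : Eu n) (y : Sph n) : 0 ≤ qA K e y :=
  hessA_nonneg hK (norm_sph y) e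

set_option maxHeartbeats 1000000 in
lemma supp_bound (hK : IsSmoothConvexBody K) {e : Eu n} (he : ‖e‖ = 1) (γ : ℝ) {δ : ℝ}
    (hδ : 0 < δ) : ∃ t0, 0 < t0 ∧ ∀ t : ℝ, |t| < t0 →
      (∀ y, |t * fdev K e γ y| ≤ 1 / 2) ∧
      ∀ w ∈ Dset K (fun y => 1 + t * fdev K e γ y), ∀ z : Sph n,
        ⟪(z : Eu n), w⟫_ℝ ≤ sfn K z * (1 + t * fdev K e γ z +
          t ^ 2 * (sfn K z * qA K e z / 2 + δ)) := by
  obtain ⟨M1, hM1, h1⟩ := sph_bdd (cont_fdev hK e γ)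
  obtain ⟨M2, hM2, h2⟩ := sph_bdd (cont_sfn hK)
  set δ' := δ / (2 * M2) with hδ'
  have hδ'0 : 0 < δ' := by positivity
  obtain ⟨M3, hM3, h3⟩ := sph_bdd (g := fun y => sfn K y * (qA K e y / 2 + δ')) (by
    have := cont_sfn hK
    have := cont_qA hK e
    fun_prop)
  obtain ⟨ρ, hρ, hT⟩ := taylor_unif hK hδ'0
  set M := 1 + M1 + M2 + M3 with hM
  have hM0 : 1 ≤ M := by linarith
  refine ⟨min (1 / (2 * M)) (min (ρ / (2 * M)) (δ / (8 * M ^ 2))), by positivity, ?_⟩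
  intro t ht
  have ht1 : |t| * M ≤ 1 / 2 := by
    have : |t| ≤ 1 / (2 * M) := ht.le.trans (min_le_left _ _)
    rw [le_div_iff₀ (by positivity)] at this
    linarith
  have ht2 : |t| * (2 * M) < ρ := by
    have : |t| < ρ / (2 * M) := lt_of_lt_of_le ht ((min_le_right _ _).trans (min_le_left _ _))
    rwa [lt_div_iff₀ (by positivity)] at this
  have ht3 : |t| * (8 * M ^ 2) ≤ δ := by
    have : |t| ≤ δ / (8 * M ^ 2) := ht.le.trans ((min_le_right _ _).trans (min_le_right _ _))
    rwa [le_div_iff₀ (by positivity)] at this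
  have hf : ∀ y, |t * fdev K e γ y| ≤ |t| * M := by
    intro y
    rw [abs_mul]
    gcongr
    linarith [h1 y]
  refine ⟨fun y => (hf y).trans ht1, ?_⟩
  rintro w ⟨y, s, hs0, hs, rfl⟩ z
  have hh : 0 < sfn K z := hK.pos z
  have hhM : sfn K z ≤ M2 := (le_abs_self _).trans (h2 z)
  have hq0 := qA_nonneg hK e z
  set u := t * fdev K e γ z with hu
  have huM := hf z
  have hu1 := abs_le.1 (huM.trans ht1)
  have hu0 : 0 < 1 + u := by linarith [hu1.1]
  set p := Xg K y with hp
  set σ := 1 + t * fdev K e γ y with hσ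
  have hσ0 : 0 < σ := hs0.trans hs
  set h := sfn K z with hhdef
  rw [real_inner_smul_right]
  by_cases ha : ⟪(z : Eu n), p⟫_ℝ ≤ 0
  · refine (mul_nonpos_of_nonneg_of_nonpos hs0.le ha).trans ?_
    positivity
  push Not at ha
  set m := h / (1 + u) with hm
  have hm0 : 0 < m := by positivity
  set g := 1 / (1 + u) with hg
  have hgm : m = h * g := by rw [hm, hg]; ring
  set B := h * (qA K e z / 2 + δ') with hB
  have hB0 : 0 ≤ B := by positivity
  have hBM : B ≤ M := by
    have : B ≤ M3 := (le_abs_self _).trans (h3 z)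
    linarith
  have hgu : g * (1 + u) = 1 := by rw [hg]; field_simp
  set H := sfn K ((z : Eu n) + (t * m) • e) with hH
  set b := ⟪p, e⟫_ℝ with hb
  have hHge : ⟪(z : Eu n), p⟫_ℝ ≤ H - t * m * b := by
    have := Xg_le hK (sph_ne y) ((z : Eu n) + (t * m) • e)
    rw [inner_add_left, real_inner_smul_left, ← hp, real_inner_comm p e, ← hb] at this
    linarith
  have hg2 : g ≤ 2 := by
    rw [hg, div_le_iff₀ hu0]; linarith [hu1.1]
  have hv : ‖(t * m) • e‖ < ρ := by
    rw [norm_smul, he, mul_one, Real.norm_eq_abs, abs_mul, abs_of_pos hm0]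
    refine lt_of_le_of_lt ?_ ht2
    gcongr
    rw [hgm]
    calc h * g ≤ M2 * 2 := by gcongr
      _ ≤ 2 * M := by linarith
  have hHle := hT z (norm_sph z) _ hv
  rw [← hH, norm_smul, he, mul_one, Real.norm_eq_abs, sq_abs, map_smul, real_inner_smul_right,
    real_inner_smul_left, real_inner_smul_right, ← hhdef] at hHle
  have hqe : ⟪hessA K (z : Eu n) e, e⟫_ℝ = qA K e z := rfl
  rw [hqe] at hHle
  set q := t ^ 2 * m ^ 2 * (qA K e z / 2 + δ') with hq
  have hfz : fdev K e γ z = ⟪Xg K (z : Eu n), e⟫_ℝ - γ := rfl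
  have hfy : fdev K e γ y = b - γ := rfl
  have hmu : m * (1 + u) = h := by rw [hm]; field_simp
  have hsum : m * σ + (H - t * m * b) ≤ 2 * h + q := by
    have e1 : m * σ + (H - t * m * b) = m * (1 + u) - t * m * ⟪Xg K (z : Eu n), e⟫_ℝ + H := by
      rw [hσ, hu, hfz, hfy]; ring
    rw [e1, hmu, hq]
    nlinarith
  have hk := rk1 hh hu0 hm hσ0 (ha.trans_le hHge) hsum
  have hqB : q = t ^ 2 * h * g ^ 2 * B := by rw [hq, hgm, hB]; ring
  have hk2 : (1 + u) * (h + q / 2) ^ 2 / h =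
      h * ((1 + u) + (t ^ 2 * g * B + t ^ 4 * g ^ 3 * B ^ 2 / 4)) := by
    rw [hqB, hg]; field_simp; ring
  have hk3 := rk3 (t := t) (B := B) (M := M) (η := δ / 2) huM ht1 hB0 hBM hM0 hgu (by linarith)
  have hBd : B + δ / 2 ≤ h * qA K e z / 2 + δ := by
    have : h * δ' ≤ δ / 2 := by
      rw [hδ']
      calc h * (δ / (2 * M2)) ≤ M2 * (δ / (2 * M2)) := by gcongr
        _ = δ / 2 := by field_simp
    rw [hB]; linarith
  calc s * ⟪(z : Eu n), p⟫_ℝ ≤ σ * (H - t * m * b) := by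
        apply mul_le_mul hs.le hHge ha.le hσ0.le
    _ ≤ _ := hk
    _ = _ := hk2
    _ ≤ h * ((1 + u) + t ^ 2 * (B + δ / 2)) :=
        mul_le_mul_of_nonneg_left (add_le_add le_rfl hk3) hh.le
    _ ≤ h * ((1 + u) + t ^ 2 * (h * qA K e z / 2 + δ)) :=
        mul_le_mul_of_nonneg_left (add_le_add le_rfl
          (mul_le_mul_of_nonneg_left hBd (sq_nonneg t))) hh.le

lemma local_bm_vol (hK : IsSmoothConvexBody K) {e : Eu n} (he : ‖e‖ = 1) (γ : ℝ) {δ : ℝ}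
    (hδ : 0 < δ) : ∃ t0, 0 < t0 ∧ ∀ t : ℝ, 0 < t → t < t0 →
      (∀ y, |t * fdev K e γ y| ≤ 1 / 2) ∧
      volume (Dset K (fun y => 1 + t * fdev K e γ y)) *
      volume (Dset K (fun y => 1 + (-t) * fdev K e γ y)) ≤
      volume (Dset K (fun y => 1 + t ^ 2 * (sfn K y * qA K e y / 2 + 2 * δ))) ^ 2 := by
  obtain ⟨t0, ht0, H⟩ := supp_bound hK he γ hδ
  refine ⟨t0, ht0, fun t htp ht => ?_⟩
  obtain ⟨h1, h2⟩ := H t (by rwa [abs_of_pos htp])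
  obtain ⟨-, h3⟩ := H (-t) (by rwa [abs_neg, abs_of_pos htp])
  refine ⟨h1, ?_⟩
  have cf := cont_fdev hK e γ
  have cs := cont_sfn hK
  have cq := cont_qA hK e
  have hC : MeasurableSet
      (Dset K (fun y => 1 + t ^ 2 * (sfn K y * qA K e y / 2 + 2 * δ)) ∪ {0}) :=
    (Dset_meas hK (Continuous.measurable (by fun_prop))).union (measurableSet_singleton _)
  have := bm_set (Dset_meas hK (ρ := fun y => 1 + t * fdev K e γ y)
    (Continuous.measurable (by fun_prop))) (Dset_meas hK (ρ := fun y => 1 + (-t) * fdev K e γ y)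
    (Continuous.measurable (by fun_prop))) hC (by
      intro a ha b hb
      set w := (1 / 2 : ℝ) • (a + b) with hw
      by_cases hw0 : w = 0
      · right; simpa using hw0
      left
      obtain ⟨s, hs, y, hy, hwy⟩ := Psi_surj hK hw0
      refine ⟨⟨y, by simpa using hy⟩, s, hs, ?_, hwy⟩
      have e1 := h2 a ha ⟨y, by simpa using hy⟩
      have e2 := h3 b hb ⟨y, by simpa using hy⟩
      have hy0 := ne_zero_of_norm_one hy
      have e3 : ⟪y, w⟫_ℝ = s * sfn K y := by
        rw [hwy, real_inner_smul_right, inner_Xg hK hy0]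
      have e4 : ⟪y, w⟫_ℝ = (⟪y, a⟫_ℝ + ⟪y, b⟫_ℝ) / 2 := by
        rw [hw, real_inner_smul_right, inner_add_right]; ring
      have hh := sfn_pos hK hy0
      simp only at e1 e2 ⊢
      set Q := sfn K y * qA K e ⟨y, by simpa using hy⟩ / 2
      have e5 : s * sfn K y ≤ (1 + t ^ 2 * (Q + δ)) * sfn K y := by
        rw [← e3, e4]
        nlinarith
      have e6 := le_of_mul_le_mul_right e5 hh
      have : 0 < t ^ 2 * δ := by positivity
      linarith)
  refine this.trans (pow_le_pow_left' ((measure_union_le _ _).trans ?_) 2)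
  simp

end loc

section loc
variable {n : ℕ} {K : Set (Eu n)}

lemma binom3 (d : ℕ) : ∃ C : ℝ, 0 ≤ C ∧ ∀ u : ℝ, |u| ≤ 1 →
    |(1 + u) ^ d - (1 + d * u + d * (d - 1) / 2 * u ^ 2)| ≤ C * |u| ^ 3 := by
  induction d with
  | zero => exact ⟨0, le_rfl, fun u _ => by simp⟩
  | succ d ih =>
    obtain ⟨C, hC, h⟩ := ih
    refine ⟨2 * C + |(d * (d - 1) / 2 : ℝ)|, by positivity, fun u hu => ?_⟩
    have h1 := h u hu
    have e : (1 + u) ^ (d + 1) - (1 + ((d + 1 : ℕ) : ℝ) * u +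
        ((d + 1 : ℕ) : ℝ) * (((d + 1 : ℕ) : ℝ) - 1) / 2 * u ^ 2) =
        (1 + u) * ((1 + u) ^ d - (1 + d * u + d * (d - 1) / 2 * u ^ 2)) +
          (d * (d - 1) / 2) * u ^ 3 := by
      push_cast; ring
    rw [e]
    refine (abs_add_le _ _).trans ?_
    rw [abs_mul, abs_mul, abs_pow, add_mul]
    have h2 : |1 + u| ≤ 2 := by
      refine (abs_add_le _ _).trans ?_
      rw [abs_one]; linarith
    have : |1 + u| * |(1 + u) ^ d - (1 + d * u + d * (d - 1) / 2 * u ^ 2)| ≤ 2 * (C * |u| ^ 3) :=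
      mul_le_mul h2 h1 (abs_nonneg _) (by norm_num)
    linarith

/-- weighted integral -/
def Iw (K : Set (Eu n)) (g : Sph n → ℝ) : ℝ := ∫ y, g y * dens K y ∂sphMeas n

lemma Iw_mono (hK : IsSmoothConvexBody K) {g k : Sph n → ℝ} (hg : Continuous g)
    (hk : Continuous k) (h : ∀ y, g y ≤ k y) : Iw K g ≤ Iw K k := by
  have hd := cont_dens hK
  exact integral_mono (sph_int (by fun_prop)) (sph_int (by fun_prop))
    fun y => mul_le_mul_of_nonneg_right (h y) (dens_pos hK (norm_sph y)).le

lemma Iw_add (hK : IsSmoothConvexBody K) {g k : Sph n → ℝ} (hg : Continuous g)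
    (hk : Continuous k) : Iw K (fun y => g y + k y) = Iw K g + Iw K k := by
  have hd := cont_dens hK
  unfold Iw
  rw [← integral_add (sph_int (by fun_prop)) (sph_int (by fun_prop))]
  congr 1; ext y; ring

lemma Iw_smul (c : ℝ) (g : Sph n → ℝ) : Iw K (fun y => c * g y) = c * Iw K g := by
  unfold Iw
  rw [← integral_const_mul]
  congr 1; ext y; ring

lemma Iw_const (c : ℝ) : Iw K (fun _ => c) = c * Iw K (fun _ => 1) := by
  rw [← Iw_smul]; simp

lemma Iw_nonneg (hK : IsSmoothConvexBody K) {g : Sph n → ℝ} (h : ∀ y, 0 ≤ g y) : 0 ≤ Iw K g :=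
  integral_nonneg fun y => mul_nonneg (h y) (dens_pos hK (norm_sph y)).le

lemma Dset_vol' (hK : IsSmoothConvexBody K) {ρ : Sph n → ℝ} (hρ : Continuous ρ)
    (hρ0 : ∀ y, 0 < ρ y) :
    volume (Dset K ρ) = ENNReal.ofReal (Iw K (fun y => ρ y ^ (n + 1)) / (n + 1)) := by
  have hd := cont_dens hK
  rw [Dset_vol hK hρ.measurable hρ0 hd.measurable,
    ← ofReal_integral_eq_lintegral_ofReal (sph_int (by fun_prop))]
  · congr 1
    rw [Iw, ← integral_div]
    congr 1; ext y; ring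
  · refine ae_of_all _ fun y => ?_
    have := dens_pos hK (norm_sph y)
    have := hρ0 y
    positivity

lemma local_bm_J (hK : IsSmoothConvexBody K) {e : Eu n} (he : ‖e‖ = 1) (γ : ℝ) {δ : ℝ}
    (hδ : 0 < δ) : ∃ t0, 0 < t0 ∧ ∀ t : ℝ, 0 < t → t < t0 →
      Iw K (fun y => (1 + t * fdev K e γ y) ^ (n + 1)) *
      Iw K (fun y => (1 + (-t) * fdev K e γ y) ^ (n + 1)) ≤
      Iw K (fun y => (1 + t ^ 2 * (sfn K y * qA K e y / 2 + 2 * δ)) ^ (n + 1)) ^ 2 := by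
  obtain ⟨t0, ht0, H⟩ := local_bm_vol hK he γ hδ
  refine ⟨t0, ht0, fun t htp ht => ?_⟩
  obtain ⟨h1, h2⟩ := H t htp ht
  have cf := cont_fdev hK e γ
  have cs := cont_sfn hK
  have cq := cont_qA hK e
  have p1 : ∀ y, 0 < 1 + t * fdev K e γ y := fun y => by linarith [(abs_le.1 (h1 y)).1]
  have p2 : ∀ y, 0 < 1 + (-t) * fdev K e γ y := fun y => by linarith [(abs_le.1 (h1 y)).2]
  have p3 : ∀ y : Sph n, 0 < 1 + t ^ 2 * (sfn K y * qA K e y / 2 + 2 * δ) := fun y => by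
    have := hK.pos y
    have := qA_nonneg hK e y
    positivity
  rw [Dset_vol' hK (by fun_prop) p1, Dset_vol' hK (by fun_prop) p2, Dset_vol' hK (by fun_prop) p3]
    at h2
  have q1 : 0 ≤ Iw K (fun y => (1 + t * fdev K e γ y) ^ (n + 1)) :=
    Iw_nonneg hK fun y => (pow_pos (p1 y) _).le
  have q2 : 0 ≤ Iw K (fun y => (1 + (-t) * fdev K e γ y) ^ (n + 1)) :=
    Iw_nonneg hK fun y => (pow_pos (p2 y) _).le
  have q3 : 0 ≤ Iw K (fun y => (1 + t ^ 2 * (sfn K y * qA K e y / 2 + 2 * δ)) ^ (n + 1)) :=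
    Iw_nonneg hK fun y => (pow_pos (p3 y) _).le
  rw [← ENNReal.ofReal_mul (by positivity), ← ENNReal.ofReal_pow (by positivity),
    ENNReal.ofReal_le_ofReal_iff (by positivity)] at h2
  rw [div_mul_div_comm, div_pow, ← pow_two (n + 1 : ℝ)] at h2
  exact (div_le_div_iff_of_pos_right (by positivity)).1 h2

lemma Iw_poly (hK : IsSmoothConvexBody K) {g : Sph n → ℝ} (hg : Continuous g) (a b c : ℝ) :
    Iw K (fun y => a + b * g y + c * g y ^ 2) =
      a * Iw K (fun _ => 1) + b * Iw K g + c * Iw K (fun y => g y ^ 2) := by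
  rw [Iw_add hK (by fun_prop) (by fun_prop), Iw_add hK (by fun_prop) (by fun_prop), Iw_const,
    Iw_smul, Iw_smul c (fun y => g y ^ 2)]

set_option maxHeartbeats 2000000 in
lemma local_bm_delta (hK : IsSmoothConvexBody K) {e : Eu n} (he : ‖e‖ = 1) (γ : ℝ)
    (h0 : Iw K (fdev K e γ) = 0) {δ : ℝ} (hδ : 0 < δ) :
    n * Iw K (fun y => fdev K e γ y ^ 2) ≤
      Iw K (fun y => sfn K y * qA K e y) + 4 * δ * Iw K (fun _ => 1) := by
  obtain ⟨t0, ht0, H⟩ := local_bm_J hK he γ hδ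
  obtain ⟨C, hC, hbin⟩ := binom3 (n + 1)
  have cf := cont_fdev hK e γ
  have cs := cont_sfn hK
  have cq := cont_qA hK e
  set f := fdev K e γ with hf
  set φ : Sph n → ℝ := fun y => sfn K y * qA K e y / 2 + 2 * δ with hφ
  have cφ : Continuous φ := by fun_prop
  obtain ⟨M1, hM1, h1⟩ := sph_bdd cf
  obtain ⟨M2, hM2, h2⟩ := sph_bdd cφ
  set W := Iw K (fun _ => 1) with hW
  have hW0 : 0 ≤ W := Iw_nonneg hK fun _ => zero_le_one
  set F2 := Iw K (fun y => f y ^ 2) with hF2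
  set P := Iw K φ with hP
  have hP0 : 0 ≤ P := Iw_nonneg hK fun y => by
    have := hK.pos y
    have := qA_nonneg hK e y
    positivity
  have hφ0 : ∀ y, 0 ≤ φ y := fun y => by
    have := hK.pos y
    have := qA_nonneg hK e y
    positivity
  set d : ℝ := ((n + 1 : ℕ) : ℝ) with hd
  have hdn : d - 1 = n := by rw [hd]; push_cast; ring
  have hd0 : 0 < d := by rw [hd]; positivity
  -- lower bound
  have low : ∀ t : ℝ, |t| * M1 ≤ 1 →
      W + t ^ 2 * (d * n / 2 * F2) - C * M1 ^ 3 * W * |t| ^ 3 ≤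
        Iw K (fun y => (1 + t * f y) ^ (n + 1)) := by
    intro t ht
    have hm := Iw_mono hK (g := fun y => (1 - C * M1 ^ 3 * |t| ^ 3) + (d * t) * f y +
      (d * n / 2 * t ^ 2) * f y ^ 2) (k := fun y => (1 + t * f y) ^ (n + 1))
      (by fun_prop) (by fun_prop) (fun y => by
        have hb : |t * f y| ≤ |t| * M1 := by
          rw [abs_mul]; gcongr; exact h1 y
        have := (abs_le.1 (hbin (t * f y) (hb.trans ht))).1
        have h3 : C * |t * f y| ^ 3 ≤ C * (|t| * M1) ^ 3 := by gcongr
        rw [hdn] at this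
        nlinarith)
    rw [Iw_poly hK cf, h0] at hm
    refine le_trans (le_of_eq ?_) hm
    ring
  have up : ∀ t : ℝ, t ^ 2 * M2 ≤ 1 →
      Iw K (fun y => (1 + t ^ 2 * φ y) ^ (n + 1)) ≤
        W + t ^ 2 * (d * P) + (d * n / 2 + C) * M2 ^ 2 * W * t ^ 4 := by
    intro t ht
    have hm := Iw_mono hK (k := fun y => (1 + (d * n / 2 + C) * M2 ^ 2 * t ^ 4) +
      (d * t ^ 2) * φ y + 0 * φ y ^ 2) (g := fun y => (1 + t ^ 2 * φ y) ^ (n + 1))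
      (by fun_prop) (by fun_prop) (fun y => by
        have hφM : φ y ≤ M2 := (le_abs_self _).trans (h2 y)
        have hb0 : 0 ≤ t ^ 2 * φ y := mul_nonneg (sq_nonneg t) (hφ0 y)
        have hb : t ^ 2 * φ y ≤ t ^ 2 * M2 := by gcongr
        have hb1 : |t ^ 2 * φ y| ≤ 1 := by rw [abs_of_nonneg hb0]; linarith
        have := (abs_le.1 (hbin _ hb1)).2
        rw [hdn, abs_of_nonneg hb0] at this
        have h3 : (t ^ 2 * φ y) ^ 3 ≤ (t ^ 2 * M2) ^ 2 := by
          calc (t ^ 2 * φ y) ^ 3 = (t ^ 2 * φ y) ^ 2 * (t ^ 2 * φ y) := by ring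
            _ ≤ (t ^ 2 * M2) ^ 2 * 1 := by gcongr; linarith
            _ = _ := by ring
        have h4 : (t ^ 2 * φ y) ^ 2 ≤ (t ^ 2 * M2) ^ 2 := by gcongr
        have h5 : C * (t ^ 2 * φ y) ^ 3 ≤ C * (t ^ 2 * M2) ^ 2 := by gcongr
        have h6 : d * n / 2 * (t ^ 2 * φ y) ^ 2 ≤ d * n / 2 * (t ^ 2 * M2) ^ 2 := by gcongr
        nlinarith)
    rw [Iw_poly hK cφ] at hm
    refine hm.trans (le_of_eq ?_)
    ring
  have key : d * n / 2 * F2 ≤ d * P := by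
    set C1 := C * M1 ^ 3 * W with hC1
    set C2 := (d * n / 2 + C) * M2 ^ 2 * W with hC2
    have hC10 : 0 ≤ C1 := by positivity
    have hC20 : 0 ≤ C2 := by positivity
    refine le_of_forall_pos_le_add fun η hη => ?_
    set t := min (t0 / 2) (min 1 (min (1 / M1) (min (1 / M2) (η / (C1 + C2 + 1))))) with ht
    have htp : 0 < t := by positivity
    have ht0' : t < t0 := lt_of_le_of_lt (min_le_left _ _) (by linarith)
    have ht1 : t ≤ 1 := (min_le_right _ _).trans (min_le_left _ _)
    have ht2 : t * M1 ≤ 1 := by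
      rw [← le_div_iff₀ hM1]
      exact (min_le_right _ _).trans ((min_le_right _ _).trans (min_le_left _ _))
    have ht3 : t * M2 ≤ 1 := by
      rw [← le_div_iff₀ hM2]
      exact (min_le_right _ _).trans ((min_le_right _ _).trans ((min_le_right _ _).trans
        (min_le_left _ _)))
    have ht4 : t * (C1 + C2 + 1) ≤ η := by
      rw [← le_div_iff₀ (by positivity)]
      exact (min_le_right _ _).trans ((min_le_right _ _).trans ((min_le_right _ _).trans
        (min_le_right _ _)))
    have l1 := low t (by rwa [abs_of_pos htp])
    have l2 := low (-t) (by rwa [abs_neg, abs_of_pos htp])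
    have u1 := up t (by nlinarith)
    have hH := H t htp ht0'
    rw [abs_of_pos htp] at l1
    rw [abs_neg, abs_of_pos htp, neg_sq] at l2
    have hJ0 : 0 ≤ Iw K (fun y => (1 + t ^ 2 * φ y) ^ (n + 1)) := Iw_nonneg hK fun y => by
      have := hφ0 y
      positivity
    set L := W + t ^ 2 * (d * n / 2 * F2) - C1 * t ^ 3 with hL
    set J := Iw K (fun y => (1 + t ^ 2 * φ y) ^ (n + 1)) with hJ
    have hLJ : L ≤ J := by
      by_cases hL0 : L ≤ 0
      · exact hL0.trans hJ0
      push Not at hL0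
      have : L ^ 2 ≤ J ^ 2 := by
        refine le_trans ?_ hH
        rw [pow_two]
        exact mul_le_mul l1 l2 hL0.le (hL0.le.trans l1)
      exact (sq_le_sq₀ hL0.le hJ0).1 this
    have hfin : t ^ 2 * (d * n / 2 * F2) ≤ t ^ 2 * (d * P + η) := by
      have e1 : C1 * t ^ 3 + C2 * t ^ 4 ≤ t ^ 2 * η := by
        have e2 : C2 * t ^ 4 ≤ C2 * t ^ 3 := by
          have : t ^ 4 ≤ t ^ 3 := by
            calc t ^ 4 = t ^ 3 * t := by ring
              _ ≤ t ^ 3 * 1 := by gcongr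
              _ = _ := by ring
          gcongr
        have e3 : t ^ 2 * (t * (C1 + C2 + 1)) ≤ t ^ 2 * η := by gcongr
        have e4 : t ^ 2 * (t * (C1 + C2 + 1)) = C1 * t ^ 3 + C2 * t ^ 3 + t ^ 3 := by ring
        have e5 := pow_pos htp 3
        linarith
      linarith
    exact le_of_mul_le_mul_left hfin (by positivity)
  have hPe : P = Iw K (fun y => sfn K y * qA K e y) / 2 + 2 * δ * W := by
    have e1 : φ = fun y : Sph n => (1 / 2 : ℝ) * (sfn K y * qA K e y) + 2 * δ := by
      ext y; rw [hφ]; ring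
    rw [hP, e1, Iw_add hK (by fun_prop) (by fun_prop), Iw_smul, Iw_const]
    ring
  have key2 : n / 2 * F2 ≤ P := by
    have : d * (n / 2 * F2) ≤ d * P := by linarith
    exact le_of_mul_le_mul_left this hd0
  rw [hPe] at key2
  linarith

lemma local_bm (hK : IsSmoothConvexBody K) {e : Eu n} (he : ‖e‖ = 1) (γ : ℝ)
    (h0 : Iw K (fdev K e γ) = 0) :
    n * Iw K (fun y => fdev K e γ y ^ 2) ≤ Iw K (fun y => sfn K y * qA K e y) := by
  have hW0 : 0 ≤ Iw K (fun _ => 1) := Iw_nonneg hK fun _ => zero_le_one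
  refine le_of_forall_pos_le_add fun η hη => ?_
  have := local_bm_delta hK he γ h0 (δ := η / (4 * (Iw K (fun _ => 1) + 1))) (by positivity)
  refine this.trans ?_
  gcongr
  rw [show 4 * (η / (4 * (Iw K (fun _ => 1) + 1))) * Iw K (fun _ => 1) =
    η * (Iw K (fun _ => 1) / (Iw K (fun _ => 1) + 1)) by field_simp]
  have : Iw K (fun _ => 1) / (Iw K (fun _ => 1) + 1) ≤ 1 := by
    rw [div_le_one (by positivity)]; linarith
  nlinarith

end loc

section sumb
variable {n : ℕ} {K : Set (Eu n)}

/-- standard basis vector -/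
def eb (n : ℕ) (i : Fin (n + 1)) : Eu n := EuclideanSpace.basisFun (Fin (n + 1)) ℝ i

lemma eb_norm (i : Fin (n + 1)) : ‖eb n i‖ = 1 := by simp [eb]

lemma eb_sum_sq (v : Eu n) : ∑ i, ⟪v, eb n i⟫_ℝ ^ 2 = ‖v‖ ^ 2 := by
  simpa [eb] using (EuclideanSpace.basisFun (Fin (n + 1)) ℝ).sum_sq_inner_left v

lemma eb_sum_mul (v w : Eu n) : ∑ i, ⟪v, eb n i⟫_ℝ * ⟪w, eb n i⟫_ℝ = ⟪v, w⟫_ℝ := by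
  have := (EuclideanSpace.basisFun (Fin (n + 1)) ℝ).sum_inner_mul_inner v w
  rw [← this]
  exact Finset.sum_congr rfl fun i _ => by rw [real_inner_comm w]; rfl

/-- trace of the Hessian -/
def trA (K : Set (Eu n)) (y : Eu n) : ℝ := ∑ i, ⟪hessA K y (eb n i), eb n i⟫_ℝ

lemma trA_nonneg (hK : IsSmoothConvexBody K) (y : Sph n) : 0 ≤ trA K y :=
  Finset.sum_nonneg fun _ _ => qA_nonneg hK _ y

lemma cont_trA (hK : IsSmoothConvexBody K) : Continuous fun y : Sph n => trA K y :=
  continuous_finsetSum _ fun _ _ => cont_qA hK _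

lemma W_pos (hK : IsSmoothConvexBody K) : 0 < ∫ x : Sph n, dens K x ∂sphMeas n := by
  have hd := cont_dens hK
  rw [integral_pos_iff_support_of_nonneg (fun y => (dens_pos hK (norm_sph y)).le) (sph_int hd)]
  have : Function.support (fun x : Sph n => dens K x) = Set.univ := by
    ext y; simp [(dens_pos hK (norm_sph y)).ne']
  rw [this, sphMeas]
  have : (volume : Measure (Eu n)).toSphere Set.univ ≠ 0 := by
    rw [Measure.toSphere_apply_univ]
    have h2 : volume (ball (0 : Eu n) 1) ≠ 0 := (measure_ball_pos _ _ one_pos).ne'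
    simp [h2]
  exact pos_iff_ne_zero.2 this

lemma Iw_fdev (hK : IsSmoothConvexBody K) (e : Eu n) : Iw K (fdev K e ⟪cK K, e⟫_ℝ) = 0 := by
  have hd := cont_dens hK
  have hX := cont_Xg hK
  have hW := W_pos hK
  have h1 : ⟪cK K, e⟫_ℝ = (∫ x : Sph n, dens K x ∂sphMeas n)⁻¹ *
      ∫ x : Sph n, dens K x * ⟪Xg K x, e⟫_ℝ ∂sphMeas n := by
    rw [cK, real_inner_smul_left, real_inner_comm, ← integral_inner]
    · congr 2
      ext x
      rw [real_inner_smul_right, real_inner_comm]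
      rfl
    · have : CompactSpace (Sph n) := inferInstance
      exact Continuous.integrable_of_hasCompactSupport (hd.smul hX)
        (HasCompactSupport.of_compactSpace _)
  have h2 : Iw K (fdev K e ⟪cK K, e⟫_ℝ) = (∫ x : Sph n, dens K x * ⟪Xg K x, e⟫_ℝ ∂sphMeas n) -
      ⟪cK K, e⟫_ℝ * ∫ x : Sph n, dens K x ∂sphMeas n := by
    rw [Iw, ← integral_const_mul, ← integral_sub (sph_int (by fun_prop)) (sph_int (by fun_prop))]
    congr 1; ext y; simp only [fdev]; ring
  rw [h2, h1]
  field_simp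
  ring

lemma Iw_sum (hK : IsSmoothConvexBody K) {ι : Type*} (s : Finset ι) (g : ι → Sph n → ℝ)
    (hg : ∀ i, Continuous (g i)) : Iw K (fun y => ∑ i ∈ s, g i y) = ∑ i ∈ s, Iw K (g i) := by
  have hd := cont_dens hK
  unfold Iw
  have h := integral_finsetSum (μ := sphMeas n) s (f := fun i (y : Sph n) => g i y * dens K y)
    fun i _ => sph_int ((hg i).mul hd)
  rw [← h]
  congr 1; ext y; rw [Finset.sum_mul]

lemma sum_bm (hK : IsSmoothConvexBody K) :
    n * Iw K (fun y => ‖Xg K y - cK K‖ ^ 2) ≤ Iw K (fun y => sfn K y * trA K y) := by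
  have cs := cont_sfn hK
  have e1 : (fun y : Sph n => ‖Xg K y - cK K‖ ^ 2) =
      fun y : Sph n => ∑ i, fdev K (eb n i) ⟪cK K, eb n i⟫_ℝ y ^ 2 := by
    ext y
    rw [← eb_sum_sq]
    simp only [fdev, inner_sub_left]
  have e2 : (fun y : Sph n => sfn K y * trA K y) =
      fun y : Sph n => ∑ i, sfn K y * qA K (eb n i) y := by
    ext y
    rw [trA, Finset.mul_sum]
    rfl
  rw [e1, e2, Iw_sum hK _ (fun i (y : Sph n) => fdev K (eb n i) ⟪cK K, eb n i⟫_ℝ y ^ 2)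
      fun i => (cont_fdev hK _ _).pow 2,
    Iw_sum hK _ (fun i (y : Sph n) => sfn K y * qA K (eb n i) y) fun i => cs.mul (cont_qA hK _),
    Finset.mul_sum]
  exact Finset.sum_le_sum fun i _ => local_bm hK (eb_norm i) _ (Iw_fdev hK _)

end sumb

section ibp
variable {n : ℕ} {K : Set (Eu n)}

lemma eb_sum_lin (L : Eu n →L[ℝ] ℝ) (z : Eu n) : ∑ i, L (eb n i) * ⟪z, eb n i⟫_ℝ = L z := by
  have h := (EuclideanSpace.basisFun (Fin (n + 1)) ℝ).sum_repr' z
  conv_rhs => rw [← h]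
  rw [map_sum]
  refine Finset.sum_congr rfl fun i _ => ?_
  rw [map_smul, smul_eq_mul, real_inner_comm, mul_comm]
  rfl

/-- divergence theorem for compactly supported fields -/
lemma div_field_zero {V : Eu n → Eu n} (hV : ContDiff ℝ 1 V) (hc : HasCompactSupport V) :
    ∫ z, ∑ i, ⟪fderiv ℝ V z (eb n i), eb n i⟫_ℝ = 0 := by
  have key : ∀ i, Integrable (fun z => ⟪fderiv ℝ V z (eb n i), eb n i⟫_ℝ) ∧
      ∫ z, ⟪fderiv ℝ V z (eb n i), eb n i⟫_ℝ = 0 := by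
    intro i
    set W : Eu n → ℝ := fun z => ⟪V z, eb n i⟫_ℝ with hW
    have hWc : ContDiff ℝ 1 W := hV.inner ℝ contDiff_const
    have hWs : HasCompactSupport W := hc.comp_left (g := fun v => ⟪v, eb n i⟫_ℝ) (by simp)
    have hfd : ∀ z, fderiv ℝ W z (eb n i) = ⟪fderiv ℝ V z (eb n i), eb n i⟫_ℝ := by
      intro z
      have hd : HasFDerivAt V (fderiv ℝ V z) z := (hV.differentiable (by simp) z).hasFDerivAt
      have := (hd.inner ℝ (hasFDerivAt_const (eb n i) z)).fderiv
      rw [hW, this]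
      simp
    have hi : Integrable (fun z => fderiv ℝ W z (eb n i)) := by
      refine Continuous.integrable_of_hasCompactSupport ?_ (hWs.fderiv_apply ℝ _)
      exact (hWc.continuous_fderiv (by simp)).clm_apply continuous_const
    have hWi : Integrable W := hWc.continuous.integrable_of_hasCompactSupport hWs
    have h := integral_mul_fderiv_eq_neg_fderiv_mul_of_integrable (μ := (volume : Measure (Eu n)))
      (f := fun _ => (1 : ℝ)) (g := W) (v := eb n i) (by simp) (by simpa using hi)
      (by simpa using hWi) (fun x _ => differentiableAt_const _)
      (fun x _ => hWc.differentiable (by simp) x)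
    simp only [one_mul, fderiv_fun_const, Pi.zero_apply, zero_apply, zero_mul,
      integral_zero, neg_zero] at h
    constructor
    · exact hi.congr (ae_of_all _ hfd)
    · rw [← h]; exact integral_congr_ae (ae_of_all _ fun z => (hfd z).symm)
  rw [integral_finsetSum _ fun i _ => (key i).1]
  exact Finset.sum_eq_zero fun i _ => (key i).2

/-- bump function -/
def bmp : ContDiffBump (2 : ℝ) := ⟨1 / 2, 1, by norm_num, by norm_num⟩

/-- radial bump -/
def rbmp (z : Eu n) : ℝ := bmp (‖z‖ ^ 2)

lemma rbmp_contDiff : ContDiff ℝ (⊤ : ℕ∞) (rbmp (n := n)) :=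
  bmp.contDiff.comp (contDiff_norm_sq ℝ)

lemma rbmp_zero_near : ∀ᶠ z : Eu n in 𝓝 0, rbmp z = 0 := by
  filter_upwards [ball_mem_nhds (0 : Eu n) one_pos] with z hz
  refine bmp.zero_of_le_dist ?_
  rw [mem_ball_zero_iff] at hz
  have h1 : ‖z‖ ^ 2 ≤ 1 := pow_le_one₀ (norm_nonneg _) hz.le
  rw [Real.dist_eq, abs_of_nonpos (by linarith)]
  simp only [bmp]
  linarith

lemma rbmp_zero_far {z : Eu n} (hz : z ∉ closedBall (0 : Eu n) 2) : rbmp z = 0 := by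
  refine bmp.zero_of_le_dist ?_
  rw [mem_closedBall_zero_iff] at hz
  push Not at hz
  rw [Real.dist_eq, abs_of_nonneg (by nlinarith)]
  simp only [bmp]
  nlinarith

lemma rbmp_compact : HasCompactSupport (rbmp (n := n)) :=
  HasCompactSupport.intro (isCompact_closedBall 0 2) fun _ hz => rbmp_zero_far hz

lemma rbmp_hasFDeriv (z : Eu n) : HasFDerivAt rbmp ((2 * deriv bmp (‖z‖ ^ 2)) • innerSL ℝ z) z := by
  have h1 : HasDerivAt bmp (deriv bmp (‖z‖ ^ 2)) (‖z‖ ^ 2) :=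
    ((bmp.contDiff (n := 1)).differentiable (by simp) _).hasDerivAt
  have h2 := h1.comp_hasFDerivAt z (hasStrictFDerivAt_norm_sq z).hasFDerivAt
  have e : (2 * deriv bmp (‖z‖ ^ 2)) • innerSL ℝ z =
      deriv bmp (‖z‖ ^ 2) • ((2 : ℕ) • innerSL ℝ z) := by
    ext v; simp; ring
  rw [e]
  exact h2

/-- the zero-homogeneous quantity -/
def qh (K : Set (Eu n)) (c z : Eu n) : ℝ := (sfn K z - ⟪z, c⟫_ℝ) ^ 2 / ‖z‖ ^ 2

lemma qh_contDiffAt (hK : IsSmoothConvexBody K) (c : Eu n) {z : Eu n} (hz : z ≠ 0) :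
    ContDiffAt ℝ (⊤ : ℕ∞) (qh K c) z := by
  have h1 := sfn_contDiffAt hK hz
  have h2 : ContDiffAt ℝ (⊤ : ℕ∞) (fun z : Eu n => ⟪z, c⟫_ℝ) z :=
    contDiffAt_id.inner ℝ contDiffAt_const
  exact ((h1.sub h2).pow 2).div (contDiff_norm_sq ℝ).contDiffAt (by simpa using hz)

lemma qh_smul (hK : IsSmoothConvexBody K) (c z : Eu n) {r : ℝ} (hr : 0 < r) :
    qh K c (r • z) = qh K c z := by
  rw [qh, qh, sfn_smul hK _ hr.le, real_inner_smul_left, norm_smul, Real.norm_of_nonneg hr.le,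
    ← mul_sub, mul_pow, mul_pow, mul_div_mul_left _ _ (by positivity)]

lemma qh_fderiv_self (hK : IsSmoothConvexBody K) (c : Eu n) {z : Eu n} (hz : z ≠ 0) :
    fderiv ℝ (qh K c) z z = 0 := by
  have h1 : HasFDerivAt (qh K c) (fderiv ℝ (qh K c) z) ((1 : ℝ) • z) := by
    rw [one_smul]
    exact ((qh_contDiffAt hK c hz).differentiableAt (by simp)).hasFDerivAt
  have h2 : HasDerivAt (fun r : ℝ => r • z) z 1 := by
    simpa using (hasDerivAt_id (1 : ℝ)).smul_const z
  have h3 := h1.comp_hasDerivAt (1 : ℝ) h2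
  have h4 : HasDerivAt (qh K c ∘ fun r : ℝ => r • z) 0 1 := by
    refine (hasDerivAt_const (1 : ℝ) (qh K c z)).congr_of_eventuallyEq ?_
    filter_upwards [lt_mem_nhds (zero_lt_one (α := ℝ))] with r hr
    exact qh_smul hK c z hr
  exact h3.unique h4

/-- tangential field -/
def Uf (K : Set (Eu n)) (c z : Eu n) : Eu n :=
  sfn K z • (Xg K z - c) - (sfn K z - ⟪z, c⟫_ℝ) • c - qh K c z • z

lemma Uf_contDiffAt (hK : IsSmoothConvexBody K) (c : Eu n) {z : Eu n} (hz : z ≠ 0) :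
    ContDiffAt ℝ (⊤ : ℕ∞) (Uf K c) z := by
  have h1 := sfn_contDiffAt hK hz
  have h2 : ContDiffAt ℝ (⊤ : ℕ∞) (fun z : Eu n => ⟪z, c⟫_ℝ) z :=
    contDiffAt_id.inner ℝ contDiffAt_const
  exact ((h1.smul ((Xg_contDiffAt hK hz).sub contDiffAt_const)).sub
    ((h1.sub h2).smul contDiffAt_const)).sub ((qh_contDiffAt hK c hz).smul contDiffAt_id)

lemma Uf_tang (hK : IsSmoothConvexBody K) (c : Eu n) {z : Eu n} (hz : z ≠ 0) :
    ⟪Uf K c z, z⟫_ℝ = 0 := by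
  have h1 := inner_Xg hK hz
  have hn : ‖z‖ ≠ 0 := by simpa using hz
  rw [real_inner_comm, Uf, inner_sub_right, inner_sub_right, real_inner_smul_right,
    real_inner_smul_right, real_inner_smul_right, inner_sub_right, h1, real_inner_self_eq_norm_sq,
    qh]
  field_simp
  ring

lemma Uf_hasFDeriv (hK : IsSmoothConvexBody K) (c : Eu n) {z : Eu n} (hz : z ≠ 0) :
    ∃ L : Eu n →L[ℝ] Eu n, HasFDerivAt (Uf K c) L z ∧ ∀ v, L v =
      sfn K z • hessA K z v + ⟪Xg K z, v⟫_ℝ • (Xg K z - c) - (⟪Xg K z, v⟫_ℝ - ⟪c, v⟫_ℝ) • c -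
      (qh K c z • v + fderiv ℝ (qh K c) z v • z) := by
  have h1 := sfn_hasFDeriv hK hz
  have h2 := Xg_hasFDeriv hK hz
  have h3 : HasFDerivAt (fun z : Eu n => ⟪z, c⟫_ℝ) (innerSL ℝ c) z := by
    have : (fun z : Eu n => ⟪z, c⟫_ℝ) = innerSL ℝ c := by
      ext w; rw [real_inner_comm]; rfl
    rw [this]
    exact (innerSL ℝ c).hasFDerivAt
  have h4 := ((qh_contDiffAt hK c hz).differentiableAt (by simp)).hasFDerivAt
  have h5 := ((h1.smul (h2.sub_const c)).sub ((h1.sub h3).smul_const c)).sub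
    (h4.smul (hasFDerivAt_id z))
  refine ⟨_, h5, fun v => ?_⟩
  simp

lemma Uf_div (hK : IsSmoothConvexBody K) (c : Eu n) {z : Eu n} (hz : z ≠ 0) :
    ∑ i, ⟪fderiv ℝ (fun z => rbmp z • Uf K c z) z (eb n i), eb n i⟫_ℝ =
      rbmp z * (sfn K z * trA K z + ‖Xg K z - c‖ ^ 2 - (n + 1) * qh K c z) := by
  obtain ⟨L, hL, hLv⟩ := Uf_hasFDeriv hK c hz
  rw [((rbmp_hasFDeriv z).fun_smul hL).fderiv]
  have e : ∀ i, ⟪(rbmp z • L + (((2 * deriv bmp (‖z‖ ^ 2)) • innerSL ℝ z).smulRight (Uf K c z)))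
      (eb n i), eb n i⟫_ℝ =
      rbmp z * (sfn K z * ⟪hessA K z (eb n i), eb n i⟫_ℝ +
        ⟪Xg K z, eb n i⟫_ℝ * ⟪Xg K z - c, eb n i⟫_ℝ - ⟪Xg K z - c, eb n i⟫_ℝ * ⟪c, eb n i⟫_ℝ -
        (qh K c z * 1 + fderiv ℝ (qh K c) z (eb n i) * ⟪z, eb n i⟫_ℝ)) +
      2 * deriv bmp (‖z‖ ^ 2) * (⟪Uf K c z, eb n i⟫_ℝ * ⟪z, eb n i⟫_ℝ) := by
    intro i
    have hn : ⟪eb n i, eb n i⟫_ℝ = 1 := by rw [real_inner_self_eq_norm_sq, eb_norm]; norm_num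
    simp only [add_apply, smul_apply, ContinuousLinearMap.smulRight_apply, innerSL_apply_apply, hLv,
      inner_add_left, inner_sub_left, real_inner_smul_left, hn, smul_eq_mul]
    ring
  rw [Finset.sum_congr rfl fun i _ => e i]
  simp only [Finset.sum_add_distrib, ← Finset.mul_sum, Finset.sum_sub_distrib, eb_sum_mul,
    eb_sum_lin, qh_fderiv_self hK c hz, Uf_tang hK c hz]
  have : ‖Xg K z - c‖ ^ 2 = ⟪Xg K z, Xg K z - c⟫_ℝ - ⟪Xg K z - c, c⟫_ℝ := by
    rw [← real_inner_self_eq_norm_sq, inner_sub_left, real_inner_comm c]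
  rw [this, trA]
  simp only [Finset.sum_const, Finset.card_univ, Fintype.card_fin, nsmul_eq_mul]
  push_cast
  ring

lemma Vf_contDiff (hK : IsSmoothConvexBody K) (c : Eu n) :
    ContDiff ℝ 1 (fun z => rbmp z • Uf K c z) := by
  rw [contDiff_iff_contDiffAt]
  intro z
  by_cases hz : z = 0
  · subst hz
    refine (contDiffAt_const (c := (0 : Eu n))).congr_of_eventuallyEq ?_
    filter_upwards [rbmp_zero_near (n := n)] with w hw
    rw [hw, zero_smul]
  · exact (rbmp_contDiff.contDiffAt.smul (Uf_contDiffAt hK c hz)).of_le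
      (WithTop.coe_le_coe.2 (le_top : (1:ℕ∞) ≤ ⊤))

lemma rbmp_smul (y : Sph n) {r : ℝ} : rbmp (r • (y : Eu n)) = bmp (r ^ 2) := by
  rw [rbmp, norm_smul, norm_sph, mul_one, Real.norm_eq_abs, sq_abs]

lemma radial_ne : ∫ r : Set.Ioi (0 : ℝ), bmp ((r : ℝ) ^ 2) ∂(Measure.volumeIoiPow n) ≠ 0 := by
  intro h0
  have h1 := polar_integral (n := n) rbmp
  have h2 : 0 < ∫ z : Eu n, rbmp z := by
    obtain ⟨y⟩ : Nonempty (Sph n) := ⟨⟨eb n 0, by simp [eb_norm]⟩⟩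
    refine rbmp_contDiff.continuous.integral_pos_of_hasCompactSupport_nonneg_nonzero rbmp_compact
      (fun z => bmp.nonneg) (x := √2 • (y : Eu n)) ?_
    rw [rbmp_smul]
    refine (bmp.pos_of_mem_ball ?_).ne'
    simp [bmp]
  have h3 : ∫ p : Sph n × Set.Ioi (0:ℝ), rbmp ((p.2 : ℝ) • (p.1 : Eu n))
      ∂((sphMeas n).prod (Measure.volumeIoiPow n)) =
      (∫ _ : Sph n, (1 : ℝ) ∂sphMeas n) *
        ∫ r : Set.Ioi (0 : ℝ), bmp ((r : ℝ) ^ 2) ∂(Measure.volumeIoiPow n) := by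
    rw [← integral_prod_mul (fun _ : Sph n => (1 : ℝ)) (fun r : Set.Ioi (0 : ℝ) => bmp ((r : ℝ) ^ 2))]
    congr 1; ext p
    rw [rbmp_smul, one_mul]
  rw [h1, h3, h0, mul_zero] at h2
  exact lt_irrefl _ h2

lemma trA_smul (hK : IsSmoothConvexBody K) {z : Eu n} (hz : z ≠ 0) {r : ℝ} (hr : 0 < r) :
    trA K (r • z) = r⁻¹ * trA K z := by
  simp only [trA, hessA_smul hK hz hr, smul_apply, real_inner_smul_left, Finset.mul_sum]

/-- Minkowski type formula -/
lemma mink (hK : IsSmoothConvexBody K) (c : Eu n) :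
    ∫ y : Sph n, sfn K y * trA K y ∂sphMeas n + ∫ y : Sph n, ‖Xg K y - c‖ ^ 2 ∂sphMeas n =
      (n + 1) * ∫ y : Sph n, (sfn K y - ⟪(y : Eu n), c⟫_ℝ) ^ 2 ∂sphMeas n := by
  have h1 := div_field_zero (Vf_contDiff hK c) (rbmp_compact.smul_right)
  rw [polar_integral] at h1
  have h2 : ∀ p : Sph n × Set.Ioi (0:ℝ),
      ∑ i, ⟪fderiv ℝ (fun z => rbmp z • Uf K c z) ((p.2 : ℝ) • (p.1 : Eu n)) (eb n i), eb n i⟫_ℝ =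
      (sfn K p.1 * trA K p.1 + ‖Xg K p.1 - c‖ ^ 2 -
        (n + 1) * (sfn K p.1 - ⟪(p.1 : Eu n), c⟫_ℝ) ^ 2) * bmp ((p.2 : ℝ) ^ 2) := by
    rintro ⟨y, r, hr⟩
    have hr' : (0 : ℝ) < r := hr
    have hy := sph_ne y
    rw [Uf_div hK c (smul_ne_zero hr'.ne' hy), rbmp_smul, sfn_smul hK _ hr'.le, Xg_smul hK hy hr',
      trA_smul hK hy hr', qh_smul hK _ _ hr', qh, norm_sph]
    simp only
    field_simp
  rw [integral_congr_ae (ae_of_all _ h2), integral_prod_mul (fun y : Sph n => sfn K y * trA K y +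
    ‖Xg K y - c‖ ^ 2 - (n + 1) * (sfn K y - ⟪(y : Eu n), c⟫_ℝ) ^ 2)
    (fun r : Set.Ioi (0:ℝ) => bmp ((r : ℝ) ^ 2))] at h1
  have h3 := (mul_eq_zero.1 h1).resolve_right radial_ne
  have cs := cont_sfn hK
  have ct := cont_trA hK
  have cX := cont_Xg hK
  rw [integral_sub (sph_int (by fun_prop)) (sph_int (by fun_prop)),
    integral_add (sph_int (by fun_prop)) (sph_int (by fun_prop)), integral_const_mul] at h3
  linarith

end ibp

section fin
variable {n : ℕ} {K : Set (Eu n)}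

/-- tangential part -/
def Tt (K : Set (Eu n)) (y : Eu n) : Eu n := Xg K y - cK K - tsfn K y • y

lemma cont_tsfn (hK : IsSmoothConvexBody K) : Continuous fun y : Sph n => tsfn K y := by
  have cs := cont_sfn hK
  unfold tsfn
  fun_prop

lemma cont_Tt (hK : IsSmoothConvexBody K) : Continuous fun y : Sph n => Tt K y := by
  have cs := cont_tsfn hK
  have cX := cont_Xg hK
  unfold Tt
  fun_prop

lemma inner_Xc (hK : IsSmoothConvexBody K) (y : Sph n) :
    ⟪(y : Eu n), Xg K y - cK K⟫_ℝ = tsfn K y := by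
  rw [inner_sub_right, inner_Xg hK (sph_ne y)]; rfl

lemma norm_Xc (hK : IsSmoothConvexBody K) (y : Sph n) :
    ‖Xg K y - cK K‖ ^ 2 = tsfn K y ^ 2 + ‖Tt K y‖ ^ 2 := by
  have h := inner_Xc hK y
  rw [real_inner_comm] at h
  rw [Tt, norm_sub_sq_real (Xg K y - cK K), real_inner_smul_right, h, norm_smul, norm_sph, mul_one,
    Real.norm_eq_abs, sq_abs]
  ring

lemma T_int_bound (hK : IsSmoothConvexBody K) {ε : ℝ} (h0 : 0 < ε) (h1 : ε < 1)
    (hd : ∀ x : Sph n, 1 - ε ≤ dens K x ∧ dens K x ≤ 1 + ε) :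
    ∫ y : Sph n, ‖Tt K y‖ ^ 2 ∂sphMeas n ≤ 2 * ε * n * ∫ y : Sph n, tsfn K y ^ 2 ∂sphMeas n := by
  have cs := cont_sfn hK
  have ct := cont_tsfn hK
  have cT := cont_Tt hK
  have cX := cont_Xg hK
  have cA := cont_trA hK
  have cd := cont_dens hK
  have hbm := sum_bm hK
  have hm := mink hK (cK K)
  set a := ∫ y : Sph n, tsfn K y ^ 2 ∂sphMeas n with ha
  set b := ∫ y : Sph n, ‖Tt K y‖ ^ 2 ∂sphMeas n with hb
  have hb0 : 0 ≤ b := integral_nonneg fun y => by positivity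
  have e1 : ∫ y : Sph n, ‖Xg K y - cK K‖ ^ 2 ∂sphMeas n = a + b := by
    rw [ha, hb, ← integral_add (sph_int (by fun_prop)) (sph_int (by fun_prop))]
    congr 1; ext y; exact norm_Xc hK y
  have i1 : (1 - ε) * (a + b) ≤ Iw K (fun y => ‖Xg K y - cK K‖ ^ 2) := by
    rw [← e1, ← integral_const_mul, Iw]
    refine integral_mono (sph_int (by fun_prop)) (sph_int (by fun_prop)) fun y => ?_
    simp only
    rw [mul_comm]
    exact mul_le_mul_of_nonneg_left (hd y).1 (by positivity)
  have i2 : Iw K (fun y => sfn K y * trA K y) ≤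
      (1 + ε) * ∫ y : Sph n, sfn K y * trA K y ∂sphMeas n := by
    rw [← integral_const_mul, Iw]
    refine integral_mono (sph_int (by fun_prop)) (sph_int (by fun_prop)) fun y => ?_
    simp only
    rw [mul_comm (1 + ε)]
    exact mul_le_mul_of_nonneg_left (hd y).2 (mul_nonneg (hK.pos y).le (trA_nonneg hK y))
  have e2 : ∫ y : Sph n, sfn K y * trA K y ∂sphMeas n = n * a - b := by
    rw [e1] at hm
    have : ∫ y : Sph n, (sfn K y - ⟪(y : Eu n), cK K⟫_ℝ) ^ 2 ∂sphMeas n = a := rfl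
    rw [this] at hm
    linarith
  rw [e2] at i2
  have hn0 : (0 : ℝ) ≤ n := Nat.cast_nonneg n
  have i3 : n * ((1 - ε) * (a + b)) ≤ (1 + ε) * (n * a - b) :=
    (mul_le_mul_of_nonneg_left i1 hn0).trans (hbm.trans i2)
  have i4 : 0 ≤ n * (1 - ε) * b := mul_nonneg (mul_nonneg hn0 (by linarith)) hb0
  have i5 : 0 ≤ ε * b := mul_nonneg h0.le hb0
  linarith

/-- total measure -/
def S0 (n : ℕ) : ℝ := (sphMeas n).real Set.univ

/-- unit ball volume -/
def om (n : ℕ) : ℝ := (volume : Measure (Eu n)).real (ball 0 1)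

lemma om_pos : 0 < om n := by
  rw [om, measureReal_def]
  exact ENNReal.toReal_pos (measure_ball_pos _ _ one_pos).ne' measure_ball_lt_top.ne

lemma S0_eq : S0 n = (n + 1) * om n := by
  rw [S0, sphMeas, Measure.toSphere_real_apply_univ, om]
  simp

lemma S0_pos : 0 < S0 n := by
  rw [S0_eq]; have := om_pos (n := n); positivity

/-- cap measure bound -/
def m0 (n : ℕ) : ℝ := Measure.toSphereBallBound (Module.finrank ℝ (Eu n)) (1 / 8) * om n

lemma m0_pos : 0 < m0 n := by
  have h1 := om_pos (n := n)
  have h2 := Measure.toSphereBallBound_pos (Module.finrank ℝ (Eu n)) (1 / 8)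
  exact mul_pos (by exact_mod_cast h2) h1

lemma m0_le (b : Sph n) : m0 n ≤ (sphMeas n).real (ball b (1 / 8)) :=
  Measure.toSphereBallBound_mul_measureReal_unitBall_le_toSphere_ball _ (by norm_num) b

lemma T_L1 (hK : IsSmoothConvexBody K) {ε R s : ℝ} (h0 : 0 < ε) (h1 : ε < 1)
    (hd : ∀ x : Sph n, 1 - ε ≤ dens K x ∧ dens K x ≤ 1 + ε) (hR : 0 < R) (hs : 0 < s)
    (hes : 2 * ε * n ≤ s ^ 2) (ht : ∀ y : Sph n, |tsfn K y| ≤ R) :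
    ∫ y : Sph n, ‖Tt K y‖ ∂sphMeas n ≤ R * S0 n * s := by
  have ct := cont_tsfn hK
  have cT := cont_Tt hK
  have hb := T_int_bound hK h0 h1 hd
  have ha : ∫ y : Sph n, tsfn K y ^ 2 ∂sphMeas n ≤ R ^ 2 * S0 n := by
    calc ∫ y : Sph n, tsfn K y ^ 2 ∂sphMeas n ≤ ∫ _ : Sph n, R ^ 2 ∂sphMeas n :=
          integral_mono (sph_int (by fun_prop)) (sph_int (by fun_prop)) fun y =>
            sq_le_sq' (abs_le.1 (ht y)).1 (abs_le.1 (ht y)).2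
      _ = _ := by rw [integral_const, smul_eq_mul, mul_comm, S0]
  have hS := S0_pos (n := n)
  have hb2 : ∫ y : Sph n, ‖Tt K y‖ ^ 2 ∂sphMeas n ≤ s ^ 2 * (R ^ 2 * S0 n) := by
    refine hb.trans (mul_le_mul hes ha (integral_nonneg fun y => by positivity) (by positivity))
  have h3 : ∫ y : Sph n, (2 * (R * s)) * ‖Tt K y‖ ∂sphMeas n ≤
      ∫ y : Sph n, (‖Tt K y‖ ^ 2 + (R * s) ^ 2) ∂sphMeas n :=
    integral_mono (sph_int (by fun_prop)) (sph_int (by fun_prop)) fun y => by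
      nlinarith [sq_nonneg (‖Tt K y‖ - R * s)]
  rw [integral_const_mul, integral_add (sph_int (by fun_prop)) (sph_int (by fun_prop)),
    integral_const, smul_eq_mul] at h3
  change _ ≤ _ + S0 n * _ at h3
  have h4 : (2 * (R * s)) * ∫ y : Sph n, ‖Tt K y‖ ∂sphMeas n ≤ (2 * (R * s)) * (R * S0 n * s) := by
    linarith
  exact le_of_mul_le_mul_left h4 (by positivity)

lemma tsfn_ineq (hK : IsSmoothConvexBody K) (x y : Sph n) :
    tsfn K y * ⟪(y : Eu n), (x : Eu n)⟫_ℝ - ‖Tt K y‖ ≤ tsfn K x := by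
  have h1 := Xg_le hK (sph_ne y) (x : Eu n)
  have h2 : ⟪(x : Eu n), Xg K y - cK K⟫_ℝ ≤ tsfn K x := by
    rw [inner_sub_right, tsfn]; linarith
  have h3 : ⟪(x : Eu n), Xg K y - cK K⟫_ℝ =
      tsfn K y * ⟪(y : Eu n), (x : Eu n)⟫_ℝ + ⟪(x : Eu n), Tt K y⟫_ℝ := by
    rw [Tt, inner_sub_right _ _ (tsfn K y • (y : Eu n)), real_inner_smul_right,
      real_inner_comm (x : Eu n) (y : Eu n)]
    ring
  have h4 : -‖Tt K y‖ ≤ ⟪(x : Eu n), Tt K y⟫_ℝ := by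
    have := abs_real_inner_le_norm (x : Eu n) (Tt K y)
    rw [norm_sph, one_mul] at this
    exact (abs_le.1 this).1
  linarith

lemma cap_step (hK : IsSmoothConvexBody K) {δ α β : ℝ}
    (hT : ∫ y : Sph n, ‖Tt K y‖ ∂sphMeas n ≤ m0 n * δ) (hδ : 0 ≤ δ) (hα : 0 ≤ α) (hβ : 0 ≤ β)
    (x b : Sph n) (hx : ∀ y ∈ ball b (1 / 8), α ≤ ⟪(y : Eu n), (x : Eu n)⟫_ℝ)
    (hb : ∀ y ∈ ball b (1 / 8), β ≤ tsfn K y) : β * α - δ ≤ tsfn K x := by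
  by_contra hcon
  push Not at hcon
  have cT := cont_Tt hK
  have hi : Integrable (fun y : Sph n => ‖Tt K y‖) (sphMeas n) := sph_int (by fun_prop)
  have h1 := setIntegral_ge_of_const_le_real (μ := sphMeas n) (s := ball b (1 / 8))
    (f := fun y : Sph n => ‖Tt K y‖) (c := β * α - tsfn K x) measurableSet_ball
    (measure_ne_top _ _) (fun y hy => by
      have h2 := tsfn_ineq hK x y
      have h3 : β * α ≤ tsfn K y * ⟪(y : Eu n), (x : Eu n)⟫_ℝ :=
        mul_le_mul (hb y hy) (hx y hy) hα (hβ.trans (hb y hy))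
      linarith) hi.integrableOn
  have h4 := setIntegral_le_integral (s := ball b (1 / 8)) hi (ae_of_all _ fun y => norm_nonneg _)
  have h5 := m0_le b
  have h6 := m0_pos (n := n)
  nlinarith

lemma cap_inner {b y : Sph n} (hy : y ∈ ball b (1 / 8)) (w : Eu n) (hw : ‖w‖ = 1) :
    ⟪(b : Eu n), w⟫_ℝ - 1 / 8 ≤ ⟪(y : Eu n), w⟫_ℝ := by
  rw [mem_ball, Subtype.dist_eq, dist_eq_norm] at hy
  have := abs_real_inner_le_norm ((y : Eu n) - b) w
  rw [hw, mul_one, inner_sub_left] at this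
  linarith [(abs_le.1 this).1]

lemma exists_perp (hn : 1 ≤ n) {x₁ : Eu n} (h1 : ‖x₁‖ = 1) (x : Eu n) :
    ∃ u : Eu n, ‖u‖ = 1 ∧ ⟪u, x₁⟫_ℝ = 0 ∧ 0 ≤ ⟪u, x⟫_ℝ := by
  have : Fact (Module.finrank ℝ (Eu n) = n + 1) := ⟨by simp⟩
  have hr := Submodule.finrank_orthogonal_span_singleton (𝕜 := ℝ) (n := n) (ne_zero_of_norm_one h1)
  have : Nontrivial (ℝ ∙ x₁)ᗮ := Module.nontrivial_of_finrank_pos (R := ℝ) (by omega)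
  obtain ⟨v, hv⟩ := exists_ne (0 : (ℝ ∙ x₁)ᗮ)
  have hv0 : (v : Eu n) ≠ 0 := by simpa using hv
  have hvp : ⟪(v : Eu n), x₁⟫_ℝ = 0 := by
    rw [real_inner_comm]
    exact Submodule.mem_orthogonal_singleton_iff_inner_right.1 v.2
  set w : Eu n := ‖(v : Eu n)‖⁻¹ • (v : Eu n) with hw
  have hw1 : ‖w‖ = 1 := by
    rw [hw, norm_smul, norm_inv, norm_norm]
    exact inv_mul_cancel₀ (norm_ne_zero_iff.2 hv0)
  have hwp : ⟪w, x₁⟫_ℝ = 0 := by rw [hw, real_inner_smul_left, hvp, mul_zero]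
  by_cases h : 0 ≤ ⟪w, x⟫_ℝ
  · exact ⟨w, hw1, hwp, h⟩
  · refine ⟨-w, by rwa [norm_neg], by rw [inner_neg_left, hwp, neg_zero], ?_⟩
    rw [inner_neg_left]; linarith

lemma normed_pt {v : Eu n} {N : ℝ} (hN : 0 < N) (h : ‖v‖ = N) : ∃ b : Sph n, (b : Eu n) = N⁻¹ • v := by
  refine ⟨⟨N⁻¹ • v, ?_⟩, rfl⟩
  rw [mem_sphere_zero_iff_norm, norm_smul, h, norm_inv, Real.norm_of_nonneg hN.le]
  field_simp

lemma chain (hn : 1 ≤ n) (hK : IsSmoothConvexBody K) {R : ℝ} (hR : 0 < R)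
    (hT : ∫ y : Sph n, ‖Tt K y‖ ∂sphMeas n ≤ m0 n * (R / 2048)) (x₁ : Sph n)
    (hx₁ : ∀ y : Sph n, R * ⟪(y : Eu n), (x₁ : Eu n)⟫_ℝ ≤ tsfn K y) (x : Sph n) :
    R / 256 ≤ tsfn K x := by
  have step2 : ∀ x : Sph n, -(1 / 2) ≤ ⟪(x : Eu n), (x₁ : Eu n)⟫_ℝ → R / 16 ≤ tsfn K x := by
    intro x hx
    set t := ⟪(x : Eu n), (x₁ : Eu n)⟫_ℝ with ht
    set N := ‖(x : Eu n) + x₁‖ with hN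
    have hN2 : N ^ 2 = 2 + 2 * t := by
      rw [hN, norm_add_sq_real, norm_sph, norm_sph]; ring
    have hN0 : 0 ≤ N := norm_nonneg _
    have hN1 : 1 ≤ N := by nlinarith
    obtain ⟨b, hb⟩ := normed_pt (by linarith) hN.symm
    have hbx : 1 / 2 ≤ ⟪(b : Eu n), (x : Eu n)⟫_ℝ := by
      rw [hb, real_inner_smul_left, inner_add_left, real_inner_self_eq_norm_sq, norm_sph,
        real_inner_comm, ← ht, inv_mul_eq_div, le_div_iff₀ (by linarith)]
      nlinarith
    have hbx1 : 1 / 2 ≤ ⟪(b : Eu n), (x₁ : Eu n)⟫_ℝ := by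
      rw [hb, real_inner_smul_left, inner_add_left, real_inner_self_eq_norm_sq, norm_sph,
        ← ht, inv_mul_eq_div, le_div_iff₀ (by linarith)]
      nlinarith
    have := cap_step hK hT (by positivity) (α := 3 / 8) (β := R * (3 / 8)) (by norm_num)
      (by positivity) x b (fun y hy => by linarith [cap_inner hy x (norm_sph x)])
      (fun y hy => by
        have h1 := cap_inner hy x₁ (norm_sph x₁)
        exact (mul_le_mul_of_nonneg_left (by linarith) hR.le).trans (hx₁ y))
    linarith
  set t := ⟪(x : Eu n), (x₁ : Eu n)⟫_ℝ with ht
  obtain ⟨u, hu, hu1, hux⟩ := exists_perp hn (norm_sph x₁) (x : Eu n)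
  set N := ‖(x : Eu n) + (3 : ℝ) • u‖ with hN
  have hN2 : N ^ 2 = 10 + 6 * ⟪u, (x : Eu n)⟫_ℝ := by
    rw [hN, norm_add_sq_real, norm_sph, norm_smul, hu, real_inner_smul_right, real_inner_comm]
    norm_num; ring
  have hN0 : 0 ≤ N := norm_nonneg _
  have hN3 : 3 ≤ N := by nlinarith
  have hu2 : ⟪u, (x : Eu n)⟫_ℝ ≤ 1 := by
    have := real_inner_le_norm u (x : Eu n)
    rwa [hu, norm_sph, mul_one] at this
  have hN4 : N ≤ 4 := by nlinarith
  have ht1 : -1 ≤ t := by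
    have := abs_real_inner_le_norm (x : Eu n) (x₁ : Eu n)
    rw [norm_sph, norm_sph, mul_one] at this
    exact (abs_le.1 this).1
  obtain ⟨b, hb⟩ := normed_pt (by linarith) hN.symm
  have hbx : 1 / 4 ≤ ⟪(b : Eu n), (x : Eu n)⟫_ℝ := by
    rw [hb, real_inner_smul_left, inner_add_left, real_inner_self_eq_norm_sq, norm_sph,
      real_inner_smul_left, inv_mul_eq_div, le_div_iff₀ (by linarith)]
    nlinarith
  have hbx1 : -(1 / 3) ≤ ⟪(b : Eu n), (x₁ : Eu n)⟫_ℝ := by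
    rw [hb, real_inner_smul_left, inner_add_left, real_inner_smul_left, hu1, ← ht, inv_mul_eq_div,
      le_div_iff₀ (by linarith)]
    linarith
  have := cap_step hK hT (by positivity) (α := 1 / 8) (β := R / 16) (by norm_num)
    (by positivity) x b (fun y hy => by linarith [cap_inner hy x (norm_sph x)])
    (fun y hy => by
      have h1 := cap_inner hy x₁ (norm_sph x₁)
      exact step2 y (by linarith))
  linarith

lemma vol_bound (hK : IsSmoothConvexBody K) (h0 : (0 : Eu n) ∈ K) {ε R : ℝ}
    (h1 : ε < 1 / 2) (hR : 0 ≤ R)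
    (hd : ∀ x : Sph n, 1 - ε ≤ dens K x ∧ dens K x ≤ 1 + ε) (c : Eu n)
    (hc : K ⊆ closedBall c R) : 1 / 2 ≤ R := by
  have cd := cont_dens hK
  have hsub : Dset K (fun _ => 1) ⊆ K := by
    rintro w ⟨y, s, hs, hs1, rfl⟩
    exact hK.convex.smul_mem_of_zero_mem h0 (Xg_mem hK (sph_ne y)) ⟨hs.le, hs1.le⟩
  have hv := measure_mono (μ := volume) (hsub.trans hc)
  rw [Dset_vol' hK continuous_const (fun _ => one_pos), Measure.addHaar_closedBall _ _ hR] at hv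
  have hom := om_pos (n := n)
  have e : volume (ball (0 : Eu n) 1) = ENNReal.ofReal (om n) := by
    rw [om, ofReal_measureReal measure_ball_lt_top.ne]
  rw [e, ← ENNReal.ofReal_mul (by positivity), ENNReal.ofReal_le_ofReal_iff (by positivity)] at hv
  have hI : (1 - ε) * S0 n ≤ Iw K (fun _ => (1 : ℝ) ^ (n + 1)) := by
    have : ∫ _ : Sph n, (1 - ε) ∂sphMeas n ≤ Iw K (fun _ => (1 : ℝ) ^ (n + 1)) :=
      integral_mono (sph_int (by fun_prop)) (sph_int (by fun_prop)) fun y => by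
        simpa using (hd y).1
    rw [integral_const, smul_eq_mul, mul_comm] at this
    exact this
  rw [S0_eq] at hI
  rw [div_le_iff₀ (by positivity)] at hv
  simp only [finrank_euclideanSpace, Fintype.card_fin] at hv
  have h3 : (1 - ε) * ((n + 1) * om n) ≤ R ^ (n + 1) * ((n + 1) * om n) := by linarith
  have h4 : 1 - ε ≤ R ^ (n + 1) := le_of_mul_le_mul_right h3 (by positivity)
  by_contra hcon
  push Not at hcon
  have h5 : R ^ (n + 1) ≤ R := by
    rw [pow_succ]
    exact mul_le_of_le_one_left hR (pow_le_one₀ hR (by linarith))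
  linarith

lemma cball_sub (hK : IsSmoothConvexBody K) {r : ℝ} (h : ∀ x : Sph n, r ≤ tsfn K x) :
    closedBall (cK K) r ⊆ K := by
  intro p hp
  by_contra hpK
  obtain ⟨f, u, hf, hu⟩ := geometric_hahn_banach_closed_point hK.convex hK.compact.isClosed hpK
  set v := (InnerProductSpace.toDual ℝ (Eu n)).symm f with hv
  have hfv : ∀ w, f w = ⟪v, w⟫_ℝ := fun w => by
    rw [hv, InnerProductSpace.toDual_symm_apply]
  have hv0 : v ≠ 0 := by
    intro h0
    obtain ⟨q, hq⟩ := isc_nonempty hK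
    have h1 := hf q hq
    rw [hfv, h0, inner_zero_left] at h1 hu
    linarith
  have hN : 0 < ‖v‖ := norm_pos_iff.2 hv0
  obtain ⟨x, hx⟩ := normed_pt hN rfl
  have hxv : v = ‖v‖ • (x : Eu n) := by rw [hx, smul_smul, mul_inv_cancel₀ hN.ne', one_smul]
  obtain ⟨q, hq, hqs⟩ := sfn_exists hK (x : Eu n)
  have h1 := (hf q hq).trans hu
  rw [hfv, hfv, hxv, real_inner_smul_left, real_inner_smul_left] at h1
  have h2 := lt_of_mul_lt_mul_left h1 hN.le
  rw [hqs] at h2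
  have h3 := h x
  rw [tsfn] at h3
  have h4 := real_inner_le_norm (x : Eu n) (p - cK K)
  rw [norm_sph, one_mul, inner_sub_right] at h4
  rw [mem_closedBall, dist_eq_norm] at hp
  linarith

lemma inrad_final (n : ℕ) (hn : 1 ≤ n) :
    ∃ ε₀ r : ℝ, 0 < ε₀ ∧ 0 < r ∧
      ∀ K : Set (Eu n), IsSmoothConvexBody K → (0 : Eu n) ∈ interior K →
        ∀ ε ∈ Set.Ioo 0 ε₀,
          (∀ x : Sph n, 1 - ε ≤ dens K x ∧ dens K x ≤ 1 + ε) →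
            closedBall (cK K) r ⊆ K ∧ ∀ x : Sph n, r ≤ tsfn K x := by
  have hS := S0_pos (n := n)
  have hm := m0_pos (n := n)
  set s := m0 n / (2048 * S0 n) with hs
  have hs0 : 0 < s := by positivity
  refine ⟨min (1 / 2) (s ^ 2 / (2 * (n + 1))), 1 / 512, by positivity, by norm_num, ?_⟩
  intro K hK h0 ε hε hd
  have hε0 : 0 < ε := hε.1
  have hε1 : ε < 1 / 2 := lt_of_lt_of_le hε.2 (min_le_left _ _)
  have hε2 : 2 * ε * n ≤ s ^ 2 := by
    have := lt_of_lt_of_le hε.2 (min_le_right _ _)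
    rw [lt_div_iff₀ (by positivity)] at this
    nlinarith
  obtain ⟨p, hp, hmax⟩ := hK.compact.exists_isMaxOn (isc_nonempty hK)
    (f := fun q => ‖q - cK K‖) (by fun_prop)
  set R := ‖p - cK K‖ with hR
  have hKR : K ⊆ closedBall (cK K) R := fun q hq => by
    rw [mem_closedBall, dist_eq_norm]; exact hmax hq
  have hR12 : 1 / 2 ≤ R :=
    vol_bound hK (interior_subset h0) hε1 (norm_nonneg _) hd _ hKR
  have hR0 : 0 < R := by linarith
  have ht : ∀ y : Sph n, |tsfn K y| ≤ R := by
    intro y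
    rw [← inner_Xc hK y]
    have := abs_real_inner_le_norm (y : Eu n) (Xg K y - cK K)
    rw [norm_sph, one_mul] at this
    exact this.trans (hmax (Xg_mem hK (sph_ne y)))
  have hT := T_L1 hK hε0 (by linarith) hd hR0 hs0 hε2 ht
  have hT' : ∫ y : Sph n, ‖Tt K y‖ ∂sphMeas n ≤ m0 n * (R / 2048) := by
    refine hT.trans (le_of_eq ?_)
    rw [hs]; field_simp
  obtain ⟨x₁, hx₁⟩ := normed_pt hR0 hR.symm
  have hall : ∀ x : Sph n, 1 / 512 ≤ tsfn K x := by
    intro x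
    have := chain hn hK hR0 hT' x₁ (fun y => by
      rw [hx₁, real_inner_smul_right, ← mul_assoc, mul_inv_cancel₀ hR0.ne', one_mul,
        inner_sub_right, tsfn]
      linarith [sfn_ge hK.compact (y : Eu n) hp]) x
    linarith
  exact ⟨cball_sub hK hall, hall⟩

end fin

/-- There exist `ε₀, r > 0` depending only on `n` such that if `K` is a smooth,
strictly convex body with the origin in its interior and `1−ε ≤ h/𝒦 ≤ 1+ε` on
`S^n` for some `ε ∈ (0, ε₀)`, then `K − c(K)` contains the closed ball of radius
`r` centered at the origin, i.e. `h̃ ≥ r` on `S^n`. -/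
theorem inradius_lower_bound (n : ℕ) (hn : 1 ≤ n) :
    ∃ ε₀ r : ℝ, 0 < ε₀ ∧ 0 < r ∧
      ∀ K : Set (Eu n), IsSmoothConvexBody K → (0 : Eu n) ∈ interior K →
        ∀ ε : ℝ, ε ∈ Set.Ioo 0 ε₀ →
          (∀ x : Sph n, 1 - ε ≤ dens K (x : Eu n) ∧ dens K (x : Eu n) ≤ 1 + ε) →
          Metric.closedBall (cK K) r ⊆ K ∧ ∀ x : Sph n, r ≤ tsfn K (x : Eu n) := by
  exact inrad_final n hn
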